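/- arXiv:2207.11744 — 4 statements merged into one kernel-verified Lean document; each statement's English description precedes it below -/
import Mathlib

section
/- Let q = r^2 with r an odd prime power. Suppose q − 1 = e_1 f_1 = e_2 f_2, there exists an integer l ≥ 2 with e_1 ≡ 2^l (mod 2^{l+1}) and 2^l | e_2, and that 2e_2 | e_1(r−1) and e_1 | e_2(r+1). Let s, t be integers with 1 ≤ s ≤ D_1, 1 ≤ t ≤ D_2 and 4 | (s−1)(r+1), and set n_1 = s·f_1 + t·f_2. If n_1 is even, then for every integer k with 1 ≤ k ≤ n_1/2 − 1 there exists an [n_1, k] MDS self-orthogonal code over F_q, i.e., a linear code C ⊆ F_q^{n_1} with dim C = k, C ⊆ C⊥, and minimum Hamming distance n_1 − k + 1. -/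
/-- The Euclidean dual of a linear code `C ⊆ F^n`. -/
def dualCode {F : Type*} [Field F] {n : ℕ} (C : Submodule F (Fin n → F)) :
    Submodule F (Fin n → F) where
  carrier := {x | ∀ c ∈ C, ∑ i, x i * c i = 0}
  add_mem' := by
    intro a b ha hb c hc
    simp only [Set.mem_setOf_eq] at ha hb ⊢
    simp [Pi.add_apply, add_mul, Finset.sum_add_distrib, ha c hc, hb c hc]
  zero_mem' := by intro c hc; simp
  smul_mem' := by
    intro r a ha c hc
    simp only [Set.mem_setOf_eq] at ha ⊢
    simp [Pi.smul_apply, smul_eq_mul, mul_assoc, ← Finset.mul_sum, ha c hc]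

/-- `C` has minimum Hamming distance `d`. -/
def IsMinDist {F : Type*} [Field F] [DecidableEq F] {n : ℕ}
    (C : Submodule F (Fin n → F)) (d : ℕ) : Prop :=
  (∀ c ∈ C, c ≠ 0 → d ≤ hammingNorm c) ∧ ∃ c ∈ C, c ≠ 0 ∧ hammingNorm c = d

open Polynomial in
theorem grs_code {F : Type*} [Field F] [DecidableEq F] {n : ℕ} (a : Fin n → F)
    (ha : Function.Injective a)
    (hsq : ∀ i, IsSquare (∏ j ∈ Finset.univ.erase i, (a i - a j)))
    (k : ℕ) (hk1 : 1 ≤ k) (hk2 : 2 * k ≤ n) :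
    ∃ C : Submodule F (Fin n → F), Module.finrank F C = k ∧ C ≤ dualCode C ∧
      IsMinDist C (n - k + 1) := by
  classical
  choose w hw using hsq
  have hw0 : ∀ i, w i ≠ 0 := by
    intro i h0
    have h := hw i
    rw [h0, mul_zero, Finset.prod_eq_zero_iff] at h
    obtain ⟨j, hj, hj0⟩ := h
    exact (Finset.ne_of_mem_erase hj) (ha (sub_eq_zero.1 hj0)).symm
  let L : F[X] →ₗ[F] (Fin n → F) :=
    { toFun := fun f i => f.eval (a i) / w i
      map_add' := by intro f g; ext i; simp [add_div]
      map_smul' := by intro c f; ext i; simp [mul_div_assoc] }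
  have hL : ∀ f i, L f i = f.eval (a i) / w i := fun f i => rfl
  have hinjOn : Set.InjOn a (Finset.univ : Finset (Fin n)) := ha.injOn
  have hwt : ∀ f : F[X], f ≠ 0 → f.natDegree < k → n - k + 1 ≤ hammingNorm (L f) := by
    intro f hf hd
    have h1 : (Finset.univ.filter (fun i => L f i = 0)).card ≤ f.natDegree := by
      have : ((Finset.univ.filter (fun i => L f i = 0)).image a).card
          = (Finset.univ.filter (fun i => L f i = 0)).card :=
        Finset.card_image_of_injective _ ha
      rw [← this]
      refine le_trans ?_ (Polynomial.card_roots' f)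
      refine le_trans (Finset.card_le_card (t := f.roots.toFinset) ?_)
        (Multiset.toFinset_card_le _)
      intro x hx
      simp only [Finset.mem_image, Finset.mem_filter, Finset.mem_univ, true_and] at hx
      obtain ⟨i, hi, rfl⟩ := hx
      rw [hL, div_eq_zero_iff] at hi
      simp [hf, hi.resolve_right (hw0 i)]
    have h2 : (Finset.univ.filter (fun i => L f i = 0)).card
        + (Finset.univ.filter (fun i => ¬ L f i = 0)).card = n := by
      rw [Finset.card_filter_add_card_filter_not]; simp
    have h3 : hammingNorm (L f) = (Finset.univ.filter (fun i => ¬ L f i = 0)).card := rfl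
    omega
  have hdeg : ∀ f ∈ degreeLT F k, f ≠ 0 → f.natDegree < k := by
    intro f hf hf0
    rw [mem_degreeLT] at hf
    exact (natDegree_lt_iff_degree_lt hf0).2 hf
  refine ⟨(degreeLT F k).map L, ?_, ?_, ?_, ?_⟩
  · have hker : Function.Injective (L.domRestrict (degreeLT F k)) := by
      rw [← LinearMap.ker_eq_bot, LinearMap.ker_eq_bot']
      rintro ⟨f, hf⟩ h
      by_contra hne
      have hf0 : f ≠ 0 := fun h => hne (by simp [h])
      have h1 := hwt f hf0 (hdeg f hf hf0)
      have h2 : L f = 0 := h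
      rw [h2] at h1
      simp at h1
    have e := LinearEquiv.ofInjective _ hker
    have h1 : LinearMap.range (L.domRestrict (degreeLT F k)) = (degreeLT F k).map L := by
      rw [LinearMap.range_domRestrict]
    rw [← h1, ← e.finrank_eq, (degreeLTEquiv F k).finrank_eq]
    simp
  · rintro _ ⟨f, hf, rfl⟩ _ ⟨g, hg, rfl⟩
    have hfd : (f * g).degree < (n - 1 : ℕ) := by
      by_cases hf0 : f = 0
      · simp [hf0]
      by_cases hg0 : g = 0
      · simp [hg0]
      have h1 := hdeg f hf hf0
      have h2 := hdeg g hg hg0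
      rw [← natDegree_lt_iff_degree_lt (mul_ne_zero hf0 hg0), natDegree_mul hf0 hg0]
      omega
    have hfd2 : (f * g).degree < (Finset.univ : Finset (Fin n)).card := by
      refine hfd.trans_le ?_
      simp
    have := Lagrange.coeff_eq_sum hinjOn hfd2
    rw [coeff_eq_zero_of_degree_lt (by simpa using hfd)] at this
    rw [this]
    refine Finset.sum_congr rfl fun i _ => ?_
    rw [hw i, hL, hL, eval_mul]
    field_simp
  · rintro _ ⟨f, hf, rfl⟩ hc
    have hf0 : f ≠ 0 := fun h => hc (by simp [h])
    exact hwt f hf0 (hdeg f hf hf0)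
  · obtain ⟨T, hT, hTc⟩ : ∃ T ⊆ (Finset.univ : Finset (Fin n)), T.card = k - 1 :=
      Finset.exists_subset_card_eq (by simp; omega)
    have hnd : (Lagrange.nodal T a).natDegree = k - 1 := by
      rw [Lagrange.natDegree_nodal, hTc]
    have hn0 : Lagrange.nodal T a ≠ 0 := Lagrange.nodal_ne_zero
    have hge := hwt _ hn0 (by omega)
    refine ⟨L (Lagrange.nodal T a), ⟨_, ?_, rfl⟩, ?_, le_antisymm ?_ hge⟩
    · show _ ∈ degreeLT F k
      rw [mem_degreeLT, ← natDegree_lt_iff_degree_lt hn0]; omega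
    · intro h
      rw [h] at hge
      simp at hge
    · have : hammingNorm (L (Lagrange.nodal T a)) ≤ (Tᶜ).card := by
        refine Finset.card_le_card ?_
        intro i hi
        simp only [Finset.mem_filter, Finset.mem_univ, true_and] at hi
        rw [Finset.mem_compl]
        intro hiT
        exact hi (by rw [hL, Lagrange.eval_nodal_at_node hiT, zero_div])
      rw [Finset.card_compl, hTc] at this
      simp at this
      omega

theorem sq_aux {F : Type*} [Field F] {r m : ℕ} (hr : r = 2 * m + 1) {z w ε : F} (hz : z ≠ 0)
    (h : z ^ r * w = ε * z) (hw : w ^ (m + 1) = 1) : z ^ (2 * m * (m + 1)) = ε ^ (m + 1) := by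
  have h1 : z ^ (2 * m) * w = ε := by
    apply mul_right_cancel₀ hz
    rw [← h, hr]; ring
  rw [← h1, mul_pow, hw, mul_one, pow_mul]

theorem index_inj {e1 e2 f1 i i' m m' : ℕ} (he1 : 0 < e1)
    (hi : i < e1 / Nat.gcd e1 e2) (hi' : i' < e1 / Nat.gcd e1 e2) (hm : m < f1) (hm' : m' < f1)
    (h : e2 * i + e1 * m ≡ e2 * i' + e1 * m' [MOD e1 * f1]) : i = i' ∧ m = m' := by
  have h1 : e2 * i + e1 * m ≡ e2 * i' + e1 * m' [MOD e1] := h.of_mul_right f1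
  have h2 : e2 * i ≡ e2 * i' [MOD e1] := by
    unfold Nat.ModEq at h1 ⊢
    simpa using h1
  have h3 := Nat.ModEq.cancel_left_div_gcd he1 h2
  have h4 : i = i' := Nat.ModEq.eq_of_lt_of_lt h3 hi hi'
  subst h4
  refine ⟨rfl, ?_⟩
  have h5 : e1 * m ≡ e1 * m' [MOD e1 * f1] := Nat.ModEq.add_left_cancel' _ h
  exact Nat.ModEq.eq_of_lt_of_lt (Nat.ModEq.mul_left_cancel' he1.ne' h5) hm hm'

open Polynomial in
theorem eval_der_aux {F : Type*} [Field F] {f : ℕ} {x c : F} (R : F[X]) (h : x ^ f = c) :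
    eval x (derivative ((X ^ f - C c) * R)) = (f : F) * x ^ (f - 1) * eval x R := by
  simp [derivative_mul, derivative_X_pow, h]

set_option maxHeartbeats 600000 in
open Polynomial in
theorem points_aux {F : Type*} [Field F] [Fintype F] [DecidableEq F]
    (r m e1 f1 e2 f2 s t l c : ℕ) (hr : r = 2 * m + 1) (hm0 : 0 < m)
    (hF : Fintype.card F = r ^ 2)
    (φ : F →+* F) (hφ : ∀ z, φ z = z ^ r)
    (hq1 : r ^ 2 - 1 = e1 * f1) (hq2 : r ^ 2 - 1 = e2 * f2)
    (hl : 2 ≤ l) (hc : e1 = 2 * c) (hc2 : ¬ 2 ^ l ∣ c) (hc3 : 2 ∣ c)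
    (he1 : 2 ^ l ∣ e1) (he2 : 2 ^ l ∣ e2)
    (hd1 : e2 ∣ e1 * m) (hd2 : e1 ∣ e2 * (m + 1))
    (hs2 : s ≤ e1 / Nat.gcd e1 e2)
    (ht2 : t ≤ e2 / Nat.gcd e1 e2)
    (h4 : 2 ∣ (m + 1) * (s - 1)) :
    ∃ a : Fin (s * f1 + t * f2) → F, Function.Injective a ∧
      ∀ i, IsSquare (∏ j ∈ Finset.univ.erase i, (a i - a j)) := by
  classical
  have hN : r ^ 2 - 1 = 4 * (m * (m + 1)) := by
    rw [hr]; apply Nat.sub_eq_of_eq_add; ring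
  have hNpos : 0 < r ^ 2 - 1 := by rw [hN]; positivity
  have he1pos : 0 < e1 := Nat.pos_of_ne_zero fun h => by simp [h] at hq1; omega
  have he2pos : 0 < e2 := Nat.pos_of_ne_zero fun h => by simp [h] at hq2; omega
  have hf1pos : 0 < f1 := Nat.pos_of_ne_zero fun h => by simp [h] at hq1; omega
  have hf2pos : 0 < f2 := Nat.pos_of_ne_zero fun h => by simp [h] at hq2; omega
  have hcard2 : Fintype.card F / 2 = 2 * m * (m + 1) := by
    have : Fintype.card F = 2 * (2 * m * (m + 1)) + 1 := by rw [hF, hr]; ring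
    omega
  have hchar : ringChar F ≠ 2 := by
    intro h
    have := FiniteField.even_card_of_char_two h
    have h2 : Fintype.card F = 2 * (2 * m * (m + 1)) + 1 := by rw [hF, hr]; ring
    omega
  have hsqp : ∀ z : F, z ^ (2 * m * (m + 1)) = 1 → IsSquare z := by
    intro z hz
    by_cases h0 : z = 0
    · simp [h0]
    · rw [FiniteField.isSquare_iff hchar h0, hcard2, hz]
  have hfix : ∀ z : F, φ z = z → IsSquare z := by
    intro z hz
    by_cases h0 : z = 0
    · simp [h0]
    apply hsqp
    have := sq_aux (z := z) (w := 1) (ε := 1) hr h0 (by rw [← hφ, hz]; ring) (by simp)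
    simpa using this
  obtain ⟨u, hu⟩ := IsCyclic.exists_generator (α := Fˣ)
  have hou : orderOf u = r ^ 2 - 1 := by
    rw [orderOf_eq_card_of_forall_mem_zpowers hu, Nat.card_eq_fintype_card, Fintype.card_units, hF]
  set g : F := (u : F) with hg
  have hgeq : ∀ x y : ℕ, g ^ x = g ^ y ↔ x ≡ y [MOD r ^ 2 - 1] := by
    intro x y
    rw [← hou, ← pow_eq_pow_iff_modEq, hg, ← Units.val_pow_eq_pow_val, ← Units.val_pow_eq_pow_val,
      Units.val_inj]
  have hg1 : ∀ x : ℕ, g ^ x = 1 ↔ r ^ 2 - 1 ∣ x := by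
    intro x
    rw [← pow_zero g, hgeq, Nat.modEq_zero_iff_dvd]
  set ξ : F := g ^ (e2 * f1) with hξ
  set η : F := g ^ (e1 * f2) with hη
  set ζ : F := g ^ (c * f2) with hζ
  clear_value ξ η ζ
  have hξm : ξ ^ (m + 1) = 1 := by
    rw [hξ, ← pow_mul, hg1, hq1, mul_right_comm]
    exact mul_dvd_mul_right hd2 _
  have hηm : η ^ m = 1 := by
    rw [hη, ← pow_mul, hg1, hq2, mul_right_comm]
    exact mul_dvd_mul_right hd1 _
  have hζη : ζ ^ 2 = η := by rw [hζ, hη, ← pow_mul, hc]; congr 1; ring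
  have hφη : φ η = η := by rw [hφ, hr, pow_succ, mul_comm 2, pow_mul, hηm]; simp
  have hφζ : φ ζ = ζ := by rw [hφ, hr, pow_succ, pow_mul, hζη, hηm]; simp
  have hφξ : φ ξ * ξ = 1 := by
    rw [hφ, ← pow_succ, hr, show 2 * m + 1 + 1 = (m + 1) * 2 by ring, pow_mul, hξm, one_pow]
  have hneg : g ^ (c * f1) = -1 := by
    have h1 : (g ^ (c * f1)) ^ 2 = 1 := by
      rw [← pow_mul, hg1, hq1, hc]; exact dvd_of_eq (by ring)
    rcases mul_self_eq_one_iff.mp ((sq _).symm.trans h1) with h | h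
    · exfalso
      rw [hg1, hq1] at h
      have h2 := Nat.le_of_dvd (by have : 0 < c := by omega
                                   positivity) h
      have : c < e1 := by omega
      exact absurd h2 (not_le.2 (Nat.mul_lt_mul_of_pos_right this hf1pos))
    · exact h
  have hξinj : ∀ i < s, ∀ j < s, ξ ^ i = ξ ^ j → i = j := by
    intro i hi j hj h
    rw [hξ, ← pow_mul, ← pow_mul, hgeq, hq1] at h
    have h2 : f1 * (e2 * i) ≡ f1 * (e2 * j) [MOD f1 * e1] := by
      convert h using 1 <;> ring
    have h3 := Nat.ModEq.mul_left_cancel' hf1pos.ne' h2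
    exact Nat.ModEq.eq_of_lt_of_lt (Nat.ModEq.cancel_left_div_gcd he1pos h3)
      (by omega) (by omega)
  let α : (Fin s × Fin f1) ⊕ (Fin t × Fin f2) → F :=
    Sum.elim (fun p => g ^ (e2 * p.1.1 + e1 * p.2.1)) (fun p => g ^ (c + (e1 * p.1.1 + e2 * p.2.1)))
  have hcross : ∀ a b a' b' : ℕ, g ^ (e2 * a + e1 * b) ≠ g ^ (c + (e1 * a' + e2 * b')) := by
    intro a b a' b' h
    rw [hgeq] at h
    have hd : 2 ^ l ∣ r ^ 2 - 1 := by rw [hq1]; exact Dvd.dvd.mul_right he1 _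
    have h' := h.of_dvd hd
    have h1 : e2 * a + e1 * b ≡ 0 [MOD 2 ^ l] :=
      Nat.modEq_zero_iff_dvd.2 (dvd_add (he2.mul_right _) (he1.mul_right _))
    have h2 := Nat.modEq_zero_iff_dvd.1 (h'.symm.trans h1)
    exact hc2 ((Nat.dvd_add_left (dvd_add (he1.mul_right _) (he2.mul_right _))).1 h2)
  have hα : Function.Injective α := by
    rintro (⟨i, k⟩ | ⟨i, k⟩) (⟨j, k'⟩ | ⟨j, k'⟩) h
    · simp only [α, Sum.elim_inl] at h
      rw [hgeq, hq1] at h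
      have := index_inj he1pos (by omega) (by omega) k.2 k'.2 h
      rw [Fin.ext this.1, Fin.ext this.2]
    · exact absurd h (hcross _ _ _ _)
    · exact absurd h.symm (hcross _ _ _ _)
    · simp only [α, Sum.elim_inr] at h
      rw [hgeq, hq2] at h
      rw [Nat.gcd_comm] at ht2
      have := index_inj he2pos (by omega) (by omega) k.2 k'.2 (Nat.ModEq.add_left_cancel' _ h)
      rw [Fin.ext this.1, Fin.ext this.2]
  -- powers of the points
  have p11 : ∀ a b : ℕ, (g ^ (e2 * a + e1 * b)) ^ f1 = ξ ^ a := by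
    intro a b
    rw [hξ, ← pow_mul, ← pow_mul, hgeq, hq1]
    have : (e2 * a + e1 * b) * f1 = e2 * f1 * a + e1 * f1 * b := by ring
    rw [this]; simp [Nat.ModEq]
  have p12 : ∀ a b : ℕ, (g ^ (e2 * a + e1 * b)) ^ f2 = η ^ b := by
    intro a b
    rw [hη, ← pow_mul, ← pow_mul, hgeq, hq2]
    have : (e2 * a + e1 * b) * f2 = e1 * f2 * b + e2 * f2 * a := by ring
    rw [this]; simp [Nat.ModEq]
  have p22 : ∀ a b : ℕ, (g ^ (c + (e1 * a + e2 * b))) ^ f2 = ζ * η ^ a := by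
    intro a b
    rw [pow_add, mul_pow, add_comm (e1 * a), p12, hζ, ← pow_mul]
  have p21 : ∀ a b : ℕ, (g ^ (c + (e1 * a + e2 * b))) ^ f1 = - ξ ^ b := by
    intro a b
    rw [pow_add, mul_pow, add_comm (e1 * a), p11, ← pow_mul, hneg]; ring
  let A : ℕ → F[X] := fun i => X ^ f1 - C (ξ ^ i)
  let B : ℕ → F[X] := fun j => X ^ f2 - C (ζ * η ^ j)
  let PP : F[X] := (∏ i ∈ Finset.range s, A i) * ∏ j ∈ Finset.range t, B j
  have hAm : ∀ i ∈ Finset.range s, (A i).Monic := fun i _ => monic_X_pow_sub_C _ hf1pos.ne'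
  have hBm : ∀ i ∈ Finset.range t, (B i).Monic := fun i _ => monic_X_pow_sub_C _ hf2pos.ne'
  have hAm' := monic_prod_of_monic _ _ hAm
  have hBm' := monic_prod_of_monic _ _ hBm
  have hPm : PP.Monic := hAm'.mul hBm'
  have hPd : PP.natDegree = s * f1 + t * f2 := by
    rw [hAm'.natDegree_mul hBm', natDegree_prod_of_monic _ _ hAm, natDegree_prod_of_monic _ _ hBm]
    simp only [A, B, natDegree_X_pow_sub_C, Finset.sum_const, Finset.card_range, smul_eq_mul]
  have hnod : Lagrange.nodal Finset.univ α = PP := by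
    refine (eq_of_monic_of_dvd_of_natDegree_le Lagrange.nodal_monic hPm ?_ ?_).symm
    · rw [Lagrange.nodal_eq]
      refine Finset.prod_dvd_of_coprime ?_ ?_
      · intro x _ y _ hxy
        exact pairwise_coprime_X_sub_C hα hxy
      · intro x _
        rw [dvd_iff_isRoot, IsRoot.def]
        simp only [PP, eval_mul, eval_prod]
        rcases x with ⟨i, k⟩ | ⟨j, k⟩
        · rw [Finset.prod_eq_zero (Finset.mem_range.2 i.2), zero_mul]
          simp [A, α, p11]
        · rw [mul_comm, Finset.prod_eq_zero (Finset.mem_range.2 j.2), zero_mul]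
          simp [B, α, p22]
    · rw [hPd, Lagrange.natDegree_nodal]; simp
  have hφfix_nat : ∀ n : ℕ, IsSquare (n : F) := fun n => hfix _ (by simp)
  have he1even : Even e1 := ⟨c, by omega⟩
  have h2l : 2 ∣ 2 ^ l := dvd_pow_self 2 (by omega)
  have he2even : Even e2 := even_iff_two_dvd.2 (h2l.trans he2)
  have hceven : Even c := even_iff_two_dvd.2 hc3
  have hgsq : ∀ n : ℕ, Even n → IsSquare (g ^ n) := fun n hn => hn.isSquare_pow g
  have hmain : ∀ x, IsSquare (eval (α x) (derivative PP)) := by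
    rintro (⟨i, k⟩ | ⟨j, k⟩)
    · have hP : PP = A i * ((∏ i' ∈ (Finset.range s).erase i, A i') *
          ∏ j ∈ Finset.range t, B j) := by
        rw [← mul_assoc, Finset.mul_prod_erase _ _ (Finset.mem_range.2 i.2)]
      have hx : α (Sum.inl (i, k)) = g ^ (e2 * i + e1 * k) := rfl
      rw [hP, hx, eval_der_aux _ (p11 i k), eval_mul, eval_prod, eval_prod]
      refine ((hφfix_nat _).mul ((hgsq _ ?_).pow _)).mul (IsSquare.mul ?_ ?_)
      · exact (he2even.mul_right _).add (he1even.mul_right _)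
      · apply hsqp
        rw [← Finset.prod_pow]
        have : ∀ i' ∈ (Finset.range s).erase i.1,
            eval (g ^ (e2 * i.1 + e1 * k.1)) (A i') ^ (2 * m * (m + 1)) = (-1) ^ (m + 1) := by
          intro i' hi'
          rw [Finset.mem_erase, Finset.mem_range] at hi'
          simp only [A, eval_sub, eval_pow, eval_X, eval_C]
          rw [p11]
          refine sq_aux (w := ξ ^ i.1 * ξ ^ i') hr ?_ ?_ ?_
          · rw [sub_ne_zero]
            exact fun h => hi'.1 (hξinj _ i.2 _ hi'.2 h).symm
          · rw [← hφ, map_sub, map_pow, map_pow]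
            have h1 : φ ξ ^ i.1 * ξ ^ i.1 = 1 := by rw [← mul_pow, hφξ, one_pow]
            have h2 : φ ξ ^ i' * ξ ^ i' = 1 := by rw [← mul_pow, hφξ, one_pow]
            linear_combination ξ ^ i' * h1 - ξ ^ i.1 * h2
          · rw [← pow_add, ← pow_mul, mul_comm, pow_mul, hξm, one_pow]
        rw [Finset.prod_congr rfl this, Finset.prod_const,
          Finset.card_erase_of_mem (Finset.mem_range.2 i.2), Finset.card_range, ← pow_mul]
        exact (even_iff_two_dvd.2 h4).neg_one_pow
      · apply hfix
        rw [map_prod]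
        refine Finset.prod_congr rfl fun j _ => ?_
        simp only [B, eval_sub, eval_pow, eval_X, eval_C]
        rw [p12]
        simp [hφη, hφζ]
    · have hP : PP = B j * ((∏ j' ∈ (Finset.range t).erase j, B j') *
          ∏ i ∈ Finset.range s, A i) := by
        rw [← mul_assoc, Finset.mul_prod_erase _ _ (Finset.mem_range.2 j.2), mul_comm]
      have hx : α (Sum.inr (j, k)) = g ^ (c + (e1 * j + e2 * k)) := rfl
      rw [hP, hx, eval_der_aux _ (p22 j k), eval_mul, eval_prod, eval_prod]
      refine ((hφfix_nat _).mul ((hgsq _ ?_).pow _)).mul (IsSquare.mul ?_ ?_)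
      · exact hceven.add ((he1even.mul_right _).add (he2even.mul_right _))
      · apply hfix
        rw [map_prod]
        refine Finset.prod_congr rfl fun j' _ => ?_
        simp only [B, eval_sub, eval_pow, eval_X, eval_C]
        rw [p22]
        simp [hφη, hφζ]
      · refine Finset.isSquare_prod _ fun i _ => ?_
        simp only [A, eval_sub, eval_pow, eval_X, eval_C]
        rw [p21, show - ξ ^ k.1 - ξ ^ i = -1 * (ξ ^ k.1 + ξ ^ i) by ring]
        refine IsSquare.mul (hfix _ (by simp)) ?_
        by_cases h0 : ξ ^ k.1 + ξ ^ i = 0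
        · simp [h0]
        apply hsqp
        rw [sq_aux (w := ξ ^ k.1 * ξ ^ i) (ε := 1) hr h0 ?_ ?_, one_pow]
        · rw [← hφ, map_add, map_pow, map_pow]
          have h1 : φ ξ ^ k.1 * ξ ^ k.1 = 1 := by rw [← mul_pow, hφξ, one_pow]
          have h2 : φ ξ ^ i * ξ ^ i = 1 := by rw [← mul_pow, hφξ, one_pow]
          linear_combination ξ ^ i * h1 + ξ ^ k.1 * h2
        · rw [← pow_add, ← pow_mul, mul_comm, pow_mul, hξm, one_pow]
  have hcI : Fintype.card ((Fin s × Fin f1) ⊕ (Fin t × Fin f2)) = s * f1 + t * f2 := by simp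
  let E := (Fintype.equivFinOfCardEq hcI).symm
  refine ⟨fun i => α (E i), hα.comp E.injective, fun i => ?_⟩
  have h1 : Lagrange.nodal Finset.univ (fun i => α (E i)) = PP := by
    rw [← hnod, Lagrange.nodal_eq, Lagrange.nodal_eq]
    exact Equiv.prod_comp E (fun x => X - C (α x))
  have h2 := Lagrange.eval_nodal_derivative_eval_node_eq (v := fun i => α (E i))
    (Finset.mem_univ i)
  rw [Lagrange.eval_nodal, h1] at h2
  rw [← h2]
  exact hmain _

/-- Theorem 5.1(1): if `n₁ = s·f₁ + t·f₂` is even, then for `1 ≤ k ≤ n₁/2 − 1` there is a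
`q`-ary `[n₁, k]` MDS self-orthogonal code, where `q = r²`. -/
theorem mds_self_orthogonal_even_length
    (r e1 f1 e2 f2 s t l : ℕ)
    (hr_odd : Odd r) (hr_pp : IsPrimePow r)
    (hq1 : r ^ 2 - 1 = e1 * f1) (hq2 : r ^ 2 - 1 = e2 * f2)
    (hl : 2 ≤ l) (he1 : e1 % 2 ^ (l + 1) = 2 ^ l) (he2 : 2 ^ l ∣ e2)
    (hdvd1 : 2 * e2 ∣ e1 * (r - 1)) (hdvd2 : e1 ∣ e2 * (r + 1))
    (hs1 : 1 ≤ s) (hs2 : s ≤ e1 / Nat.gcd e1 e2)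
    (ht1 : 1 ≤ t) (ht2 : t ≤ e2 / Nat.gcd e1 e2)
    (h4 : 4 ∣ (s - 1) * (r + 1))
    (hn1 : Even (s * f1 + t * f2))
    (F : Type*) [Field F] [Fintype F] [DecidableEq F]
    (hF : Fintype.card F = r ^ 2) :
    ∀ k : ℕ, 1 ≤ k → k ≤ (s * f1 + t * f2) / 2 - 1 →
      ∃ C : Submodule F (Fin (s * f1 + t * f2) → F),
        Module.finrank F C = k ∧
        C ≤ dualCode C ∧
        IsMinDist C (s * f1 + t * f2 - k + 1) := by
  intro k hk1 hk2
  have hn : 2 * k ≤ s * f1 + t * f2 := by omega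
  obtain ⟨m, hm⟩ := hr_odd
  have hr1 : 1 < r := hr_pp.one_lt
  have hm0 : 0 < m := by omega
  obtain ⟨p, n, hp, hn0, hpr⟩ := hr_pp
  have hp' : p.Prime := hp.nat_prime
  have : Fact p.Prime := ⟨hp'⟩
  have : CharP F p := by
    refine charP_of_card_eq_prime_pow (f := n * 2) ?_
    rw [hF, ← hpr, pow_mul]
  have hl2 : 2 ^ l ∣ e1 := by
    rw [← Nat.mod_add_div e1 (2 ^ (l + 1)), he1]
    exact dvd_add dvd_rfl ((pow_dvd_pow 2 (by omega)).mul_right _)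
  obtain ⟨o, ho⟩ := hl2
  have hoodd : ¬ 2 ∣ o := by
    rintro ⟨o', rfl⟩
    have : e1 % 2 ^ (l + 1) = 0 := by
      rw [ho, ← mul_assoc, ← pow_succ]; simp
    rw [this] at he1
    exact absurd he1.symm (by positivity)
  obtain ⟨l', rfl⟩ : ∃ l', l = l' + 1 := ⟨l - 1, by omega⟩
  have hcop : Nat.Coprime 2 o := (Nat.Prime.coprime_iff_not_dvd Nat.prime_two).2 hoodd
  obtain ⟨a, ha, hsq⟩ := points_aux (F := F) r m e1 f1 e2 f2 s t (l' + 1) (2 ^ l' * o) hm hm0 hF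
    (iterateFrobenius F p n) (fun z => by rw [iterateFrobenius_def, hpr]) hq1 hq2 hl
    (by rw [ho]; ring)
    (by
      intro h
      rw [pow_succ] at h
      exact hoodd (Nat.dvd_of_mul_dvd_mul_left (by positivity) h))
    ((dvd_pow_self 2 (by omega)).mul_right _) ⟨o, ho⟩ he2
    (by
      rw [hm, Nat.add_sub_cancel, show e1 * (2 * m) = 2 * (e1 * m) by ring] at hdvd1
      exact Nat.dvd_of_mul_dvd_mul_left (by norm_num) hdvd1)
    (by
      rw [ho]
      refine Nat.Coprime.mul_dvd_of_dvd_of_dvd (hcop.pow_left _) (he2.mul_right _) ?_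
      refine hcop.symm.dvd_of_dvd_mul_left (?_ : o ∣ 2 * (e2 * (m + 1)))
      refine (Dvd.intro_left _ ho.symm).trans (hdvd2.trans (dvd_of_eq ?_))
      rw [hm]; ring)
    hs2 ht2
    (by
      rw [hm, show (s - 1) * (2 * m + 1 + 1) = 2 * ((m + 1) * (s - 1)) by ring] at h4
      exact Nat.dvd_of_mul_dvd_mul_left (by norm_num) (h4 : 2 * 2 ∣ _))
  exact grs_code a ha hsq k hk1 hn
end

section
/- Let q = r^2 with r an odd prime power. Suppose q − 1 = e_1 f_1 = e_2 f_2, there exists an integer l ≥ 2 with e_1 ≡ 2^l (mod 2^{l+1}) and 2^l | e_2, and that 2e_2 | e_1(r−1) and e_1 | e_2(r+1). Let s, t be integers with 1 ≤ s ≤ D_1, 1 ≤ t ≤ D_2 and 4 | (s−1)(r+1), and set n_1 = s·f_1 + t·f_2. If n_1 is even, then there exists an MDS almost self-dual code over F_q of length n_1 + 1, i.e., a linear code C ⊆ F_q^{n_1+1} with dim C = n_1/2, C ⊆ C⊥, dim C⊥ = dim C + 1, and minimum Hamming distance n_1/2 + 2. -/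
open Polynomial in
lemma code_aux {F : Type*} [Field F] [DecidableEq F] (n k : ℕ) (hn : n = 2 * k) (hk : 1 ≤ k)
    (v : Fin (n + 1) → F) (hv : Function.Injective v)
    (hsq : ∀ i, IsSquare (∏ j ∈ Finset.univ.erase i, (v i - v j))) :
    ∃ C : Submodule F (Fin (n + 1) → F),
      Module.finrank F C = n / 2 ∧
      C ≤ dualCode C ∧
      Module.finrank F (dualCode C) = Module.finrank F C + 1 ∧
      IsMinDist C (n / 2 + 2) := by
  choose w hw using hsq
  have hw0 : ∀ i, w i ≠ 0 := by
    intro i h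
    have := hw i
    rw [h, mul_zero, Finset.prod_eq_zero_iff] at this
    obtain ⟨j, hj, hj'⟩ := this
    exact (Finset.ne_of_mem_erase hj) (hv (sub_eq_zero.1 hj')).symm
  let φ : F[X] →ₗ[F] (Fin (n + 1) → F) :=
    { toFun := fun p i => p.eval (v i) / w i
      map_add' := by intro p q; ext i; simp [add_div]
      map_smul' := by intro c p; ext i; simp [mul_div_assoc] }
  have hφ : ∀ p i, φ p i = p.eval (v i) / w i := fun _ _ => rfl
  -- weight bound
  have hwt : ∀ p : F[X], p ∈ degreeLT F k → p ≠ 0 → k + 2 ≤ hammingNorm (φ p) := by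
    intro p hp hp0
    rw [mem_degreeLT] at hp
    have hp' : p.natDegree < k := (natDegree_lt_iff_degree_lt hp0).2 hp
    have h1 : (Finset.univ.filter fun i => φ p i = 0).card ≤ p.natDegree := by
      rw [← Finset.card_image_of_injective _ hv]
      refine le_trans (Finset.card_le_card (t := p.roots.toFinset) ?_)
        ((Multiset.toFinset_card_le _).trans (card_roots' p))
      intro x hx
      simp only [Finset.mem_image, Finset.mem_filter, Finset.mem_univ, true_and] at hx
      obtain ⟨i, hi, rfl⟩ := hx
      rw [hφ, div_eq_zero_iff, or_iff_left (hw0 i)] at hi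
      simp [hp0, hi]
    have h2 := Finset.card_filter_add_card_filter_not (s := (Finset.univ : Finset (Fin (n+1))))
      (fun i => φ p i = 0)
    rw [Finset.card_univ, Fintype.card_fin] at h2
    unfold hammingNorm
    have h3 : (Finset.univ.filter fun i => φ p i ≠ 0).card = (Finset.univ.filter fun i => ¬ φ p i = 0).card := rfl
    rw [h3]
    omega
  have hinj : Function.Injective (φ.domRestrict (degreeLT F k)) := by
    rw [← LinearMap.ker_eq_bot, LinearMap.ker_eq_bot']
    rintro ⟨p, hp⟩ h
    by_contra hne
    have hp0 : p ≠ 0 := fun h => hne (by ext1; simpa using h)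
    have := hwt p hp hp0
    have h' : φ p = 0 := h
    rw [h'] at this
    simp at this
  have hfr : Module.finrank F (LinearMap.range (φ.domRestrict (degreeLT F k))) = k := by
    rw [LinearMap.finrank_range_of_inj hinj, (degreeLTEquiv F k).finrank_eq]
    simp
  have hn2 : n / 2 = k := by omega
  rw [hn2]
  refine ⟨LinearMap.range (φ.domRestrict (degreeLT F k)), hfr, ?_, ?_, ?_, ?_⟩
  · rintro _ ⟨⟨p, hp⟩, rfl⟩ _ ⟨⟨q, hq⟩, rfl⟩
    change ∑ i, φ p i * φ q i = 0
    rw [mem_degreeLT] at hp hq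
    have hd : (p * q).degree < ((2 * k - 1 : ℕ) : WithBot ℕ) := by
      by_cases hp0 : p = 0
      · simp [hp0]
      by_cases hq0 : q = 0
      · simp [hq0]
      rw [← natDegree_lt_iff_degree_lt hp0] at hp
      rw [← natDegree_lt_iff_degree_lt hq0] at hq
      rw [← natDegree_lt_iff_degree_lt (mul_ne_zero hp0 hq0), natDegree_mul hp0 hq0]
      omega
    have := Lagrange.coeff_eq_sum (s := Finset.univ) (v := v) hv.injOn (P := p * q)
      (hd.trans (by rw [Finset.card_univ, Fintype.card_fin]; exact_mod_cast (by omega)))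
    rw [coeff_eq_zero_of_degree_lt (hd.trans_le (by
      rw [Finset.card_univ, Fintype.card_fin]; exact_mod_cast (by omega)))] at this
    rw [this]
    refine Finset.sum_congr rfl fun i _ => ?_
    rw [hφ, hφ, hw i, eval_mul]
    field_simp [hw0 i]
  · have hB : (Matrix.toBilin' (1 : Matrix (Fin (n+1)) (Fin (n+1)) F)).Nondegenerate :=
      LinearMap.BilinForm.nondegenerate_toBilin'_of_det_ne_zero' _ (by simp)
    have := LinearMap.BilinForm.finrank_orthogonal hB (LinearMap.range (φ.domRestrict (degreeLT F k)))
    rw [hfr] at this ⊢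
    have he : dualCode (LinearMap.range (φ.domRestrict (degreeLT F k))) =
        (Matrix.toBilin' (1 : Matrix (Fin (n+1)) (Fin (n+1)) F)).orthogonal
          (LinearMap.range (φ.domRestrict (degreeLT F k))) := by
      ext x
      rw [LinearMap.BilinForm.mem_orthogonal_iff]
      refine forall₂_congr fun c _ => ?_
      rw [Matrix.toBilin'_apply']
      simp [dotProduct, mul_comm]
    rw [he, this]
    simp
    omega
  · rintro _ ⟨⟨p, hp⟩, rfl⟩ hne
    refine hwt p hp ?_
    rintro rfl
    exact hne (map_zero φ)
  · let g : Fin (k - 1) → Fin (n + 1) := fun i => ⟨i, by omega⟩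
    have hg : Function.Injective g := fun a b h => by simpa [g, Fin.ext_iff] using h
    let J : Finset (Fin (n+1)) := Finset.univ.image g
    have hJ : J.card = k - 1 := by
      rw [Finset.card_image_of_injective _ hg]; simp
    have hp0 : Lagrange.nodal J v ≠ 0 := Lagrange.nodal_ne_zero
    have hp : Lagrange.nodal J v ∈ degreeLT F k := by
      rw [mem_degreeLT, Lagrange.degree_nodal, hJ]
      exact_mod_cast (by omega)
    have h1 := hwt _ hp hp0
    refine ⟨φ (Lagrange.nodal J v), ⟨⟨_, hp⟩, rfl⟩, ?_, le_antisymm ?_ h1⟩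
    · intro h
      rw [h] at h1
      simp at h1
    · have : (Finset.univ.filter fun i => φ (Lagrange.nodal J v) i ≠ 0) ⊆ Jᶜ := by
        intro i hi
        rw [Finset.mem_compl]
        intro hiJ
        have := (Finset.mem_filter.1 hi).2
        rw [hφ, Lagrange.eval_nodal_at_node hiJ] at this
        simp at this
      have := Finset.card_le_card this
      rw [Finset.card_compl, hJ, Fintype.card_fin] at this
      unfold hammingNorm
      refine le_trans this ?_
      omega

open Polynomial in
lemma code_of_poly {F : Type*} [Field F] [DecidableEq F] (n : ℕ) (hn : Even n) (hn0 : 0 < n)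
    (T : Finset F) (hT : T.card = n + 1) (P : F[X]) (hP : P.Monic) (hd : P.natDegree = n + 1)
    (hroot : ∀ a ∈ T, P.eval a = 0) (hsq : ∀ a ∈ T, IsSquare (P.derivative.eval a)) :
    ∃ C : Submodule F (Fin (n + 1) → F),
      Module.finrank F C = n / 2 ∧
      C ≤ dualCode C ∧
      Module.finrank F (dualCode C) = Module.finrank F C + 1 ∧
      IsMinDist C (n / 2 + 2) := by
  let ψ : Fin (n + 1) ≃ T := (T.equivFinOfCardEq hT).symm
  let v : Fin (n + 1) → F := fun i => ψ i
  have hv : Function.Injective v := Subtype.val_injective.comp ψ.injective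
  have hPn : P = Lagrange.nodal Finset.univ v := by
    refine eq_of_degree_le_of_eval_finset_eq T ?_ ?_ ?_ ?_
    · rw [degree_eq_natDegree hP.ne_zero, hd, hT]
    · rw [degree_eq_natDegree hP.ne_zero, hd, Lagrange.degree_nodal]; simp
    · rw [hP.leadingCoeff, Lagrange.nodal_monic.leadingCoeff]
    · intro a ha
      rw [hroot a ha]
      have : a = v (ψ.symm ⟨a, ha⟩) := by simp [v]
      rw [this, Lagrange.eval_nodal_at_node (Finset.mem_univ _)]
  obtain ⟨k, hk⟩ := hn
  refine code_aux n k (by omega) (by omega) v hv fun i => ?_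
  have := hsq (v i) (ψ i).2
  rw [hPn, Lagrange.eval_nodal_derivative_eval_node_eq (Finset.mem_univ _), Lagrange.eval_nodal] at this
  exact this

section core
variable {F : Type*} [Field F] [Fintype F] [DecidableEq F]

lemma sq_of_pow {ρ : ℕ} (hρ : 0 < ρ) (hF : Fintype.card F = (2 * ρ + 1) ^ 2) (x y : F)
    (hxy : x ^ (2 * ρ + 1) = y * x) (hy : y ^ (ρ + 1) = 1) : IsSquare x := by
  by_cases hx : x = 0
  · simp [hx]
  have hc : ringChar F ≠ 2 := by
    intro h
    have := FiniteField.even_card_of_char_two h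
    rw [hF] at this
    have h2 : (2 * ρ + 1) ^ 2 = 2 * (2 * ρ * ρ + 2 * ρ) + 1 := by ring
    omega
  rw [FiniteField.isSquare_iff hc hx, hF]
  have h2 : (2 * ρ + 1) ^ 2 = 2 * (2 * ρ * (ρ + 1)) + 1 := by ring
  have h3 : (2 * ρ + 1) ^ 2 / 2 = 2 * ρ * (ρ + 1) := by omega
  rw [h3, pow_mul]
  rw [pow_succ] at hxy
  rw [mul_right_cancel₀ hx hxy, hy]

lemma sq_fix {ρ : ℕ} (hρ : 0 < ρ) (hF : Fintype.card F = (2 * ρ + 1) ^ 2) (σ : F →+* F)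
    (hσ : ∀ x, σ x = x ^ (2 * ρ + 1)) (x : F) (hx : σ x = x) : IsSquare x :=
  sq_of_pow hρ hF x 1 (by rw [← hσ, hx, one_mul]) (one_pow _)

lemma sq_add {ρ : ℕ} (hρ : 0 < ρ) (hF : Fintype.card F = (2 * ρ + 1) ^ 2) (σ : F →+* F)
    (hσ : ∀ x, σ x = x ^ (2 * ρ + 1)) (a b : F) (ha : a ^ (ρ + 1) = 1) (hb : b ^ (ρ + 1) = 1) :
    IsSquare (a + b) := by
  have ha' : a ^ (2 * ρ + 1) * a = 1 := by
    rw [← pow_succ, show 2 * ρ + 1 + 1 = (ρ + 1) * 2 by ring, pow_mul, ha, one_pow]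
  have hb' : b ^ (2 * ρ + 1) * b = 1 := by
    rw [← pow_succ, show 2 * ρ + 1 + 1 = (ρ + 1) * 2 by ring, pow_mul, hb, one_pow]
  refine sq_of_pow hρ hF _ (a ^ (2 * ρ + 1) * b ^ (2 * ρ + 1)) ?_ ?_
  · rw [← hσ, map_add, hσ, hσ]
    linear_combination (-b ^ (2 * ρ + 1)) * ha' - a ^ (2 * ρ + 1) * hb'
  · rw [mul_pow, ← pow_mul, ← pow_mul, mul_comm, mul_comm _ (ρ+1), pow_mul, pow_mul, ha, hb]
    simp

lemma sq_sub {ρ : ℕ} (hρ : 0 < ρ) (hF : Fintype.card F = (2 * ρ + 1) ^ 2) (σ : F →+* F)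
    (hσ : ∀ x, σ x = x ^ (2 * ρ + 1)) (ε : F) (hε : ε ^ (2 * ρ) = -1)
    (a b : F) (ha : a ^ (ρ + 1) = 1) (hb : b ^ (ρ + 1) = 1) :
    IsSquare (ε * (a - b)) := by
  have ha' : a ^ (2 * ρ + 1) * a = 1 := by
    rw [← pow_succ, show 2 * ρ + 1 + 1 = (ρ + 1) * 2 by ring, pow_mul, ha, one_pow]
  have hb' : b ^ (2 * ρ + 1) * b = 1 := by
    rw [← pow_succ, show 2 * ρ + 1 + 1 = (ρ + 1) * 2 by ring, pow_mul, hb, one_pow]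
  refine sq_of_pow hρ hF _ (a ^ (2 * ρ + 1) * b ^ (2 * ρ + 1)) ?_ ?_
  · rw [← hσ, map_mul, map_sub, hσ, hσ, hσ, pow_succ ε, hε]
    linear_combination (-ε * b ^ (2 * ρ + 1)) * ha' + ε * a ^ (2 * ρ + 1) * hb'
  · rw [mul_pow, ← pow_mul, ← pow_mul, mul_comm, mul_comm _ (ρ+1), pow_mul, pow_mul, ha, hb]
    simp

lemma isSquare_prod' {ι : Type*} (s : Finset ι) (g : ι → F) (h : ∀ i ∈ s, IsSquare (g i)) :
    IsSquare (∏ i ∈ s, g i) :=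
  Finset.prod_induction g IsSquare (fun _ _ => IsSquare.mul) IsSquare.one h

open Polynomial in
lemma deriv_eval_factor (Q R : F[X]) (a : F) (h : Q.eval a = 0) :
    (derivative (Q * R)).eval a = (derivative Q).eval a * R.eval a := by
  simp [h]

/-- The polynomial whose roots are the evaluation points. -/
noncomputable def bigP (α β γ : F) (f1 f2 s t : ℕ) : Polynomial F :=
  Polynomial.X * (∏ i ∈ Finset.range s, (Polynomial.X ^ f1 - Polynomial.C (α ^ i))) *
    ∏ j ∈ Finset.range t, (Polynomial.X ^ f2 - Polynomial.C (γ * β ^ j))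

open Polynomial in
lemma bigP_monic (α β γ : F) (f1 f2 s t : ℕ) (h1 : 0 < f1) (h2 : 0 < f2) :
    (bigP α β γ f1 f2 s t).Monic :=
  (monic_X.mul (monic_prod_of_monic _ _ fun i _ => monic_X_pow_sub_C _ h1.ne')).mul
    (monic_prod_of_monic _ _ fun i _ => monic_X_pow_sub_C _ h2.ne')

open Polynomial in
lemma bigP_natDegree (α β γ : F) (f1 f2 s t : ℕ) (h1 : 0 < f1) (h2 : 0 < f2) :
    (bigP α β γ f1 f2 s t).natDegree = s * f1 + t * f2 + 1 := by
  have m1 : (∏ i ∈ Finset.range s, (X ^ f1 - C (α ^ i))).Monic :=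
    (monic_prod_of_monic _ _ fun i _ => monic_X_pow_sub_C _ h1.ne')
  have m2 : (∏ j ∈ Finset.range t, (X ^ f2 - C (γ * β ^ j))).Monic :=
    (monic_prod_of_monic _ _ fun i _ => monic_X_pow_sub_C _ h2.ne')
  unfold bigP
  rw [(monic_X.mul m1).natDegree_mul m2, monic_X.natDegree_mul m1,
    natDegree_prod_of_monic _ _ (fun i _ => monic_X_pow_sub_C _ h1.ne'),
    natDegree_prod_of_monic _ _ (fun i _ => monic_X_pow_sub_C _ h2.ne')]
  simp only [natDegree_X, natDegree_X_pow_sub_C, Finset.sum_const, Finset.card_range, smul_eq_mul]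
  ring

open Polynomial in
lemma bigP_A {ρ : ℕ} (hρ : 0 < ρ) (hF : Fintype.card F = (2 * ρ + 1) ^ 2) (σ : F →+* F)
    (hσ : ∀ x, σ x = x ^ (2 * ρ + 1)) (ε : F) (hε : ε ^ (2 * ρ) = -1)
    (α β γ : F) (f1 f2 s t : ℕ) (h1 : 0 < f1)
    (hα : α ^ (ρ + 1) = 1) (hβ : σ β = β) (hγ : σ γ = γ)
    (hs : IsSquare (ε ^ (s - 1)))
    (a : F) (i : ℕ) (hi : i < s) (ha : a ^ f1 = α ^ i) (ha2 : σ (a ^ f2) = a ^ f2) :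
    (bigP α β γ f1 f2 s t).eval a = 0 ∧ IsSquare ((bigP α β γ f1 f2 s t).derivative.eval a) := by
  have hu : ∀ i : ℕ, (α ^ i) ^ (ρ + 1) = 1 := fun i => by
    rw [← pow_mul, mul_comm, pow_mul, hα, one_pow]
  have hε0 : ε ≠ 0 := by
    rintro rfl
    rw [zero_pow (by omega)] at hε
    exact absurd hε.symm (neg_ne_zero.2 one_ne_zero)
  have e : bigP α β γ f1 f2 s t = (X ^ f1 - C (α ^ i)) *
      (X * (∏ i' ∈ (Finset.range s).erase i, (X ^ f1 - C (α ^ i'))) *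
        ∏ j ∈ Finset.range t, (X ^ f2 - C (γ * β ^ j))) := by
    unfold bigP
    rw [← Finset.mul_prod_erase _ _ (Finset.mem_range.2 hi)]
    ring
  have h0 : (X ^ f1 - C (α ^ i)).eval a = 0 := by simp [ha]
  rw [e]
  refine ⟨by rw [eval_mul, h0, zero_mul], ?_⟩
  rw [deriv_eval_factor _ _ _ h0]
  have e2 : eval a (derivative (X ^ f1 - C (α ^ i))) * eval a
      (X * (∏ i' ∈ (Finset.range s).erase i, (X ^ f1 - C (α ^ i'))) *
        ∏ j ∈ Finset.range t, (X ^ f2 - C (γ * β ^ j))) =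
      (f1 : F) * a ^ f1 * (∏ i' ∈ (Finset.range s).erase i, (α ^ i - α ^ i')) *
        ∏ j ∈ Finset.range t, (a ^ f2 - γ * β ^ j) := by
    simp only [eval_mul, eval_prod, eval_sub, eval_pow, eval_X, eval_C, derivative_sub,
      derivative_X_pow, derivative_C, eval_natCast, eval_zero, ha, sub_zero, map_natCast]
    rw [← ha, ← pow_sub_one_mul h1.ne' a]
    ring
  rw [e2]
  refine ((IsSquare.mul ?_ ?_).mul ?_).mul ?_
  · exact sq_fix hρ hF σ hσ _ (map_natCast _ _)
  · rw [ha]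
    exact (sq_of_pow hρ hF _ (α ^ (2 * ρ)) (by rw [pow_succ])
      (by rw [← pow_mul, mul_comm, pow_mul, hα, one_pow])).pow i
  · have e3 : ∏ i' ∈ (Finset.range s).erase i, (α ^ i - α ^ i') =
        (∏ i' ∈ (Finset.range s).erase i, ε * (α ^ i - α ^ i')) / ε ^ (s - 1) := by
      rw [Finset.prod_mul_distrib, Finset.prod_const, Finset.card_erase_of_mem (Finset.mem_range.2 hi),
        Finset.card_range]
      field_simp
    rw [e3]
    exact (isSquare_prod' _ _ fun i' _ => sq_sub hρ hF σ hσ ε hε _ _ (hu _) (hu _)).div hs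
  · refine isSquare_prod' _ _ fun j _ => sq_fix hρ hF σ hσ _ ?_
    rw [map_sub, ha2, map_mul, map_pow, hβ, hγ]

open Polynomial in
lemma bigP_B {ρ : ℕ} (hρ : 0 < ρ) (hF : Fintype.card F = (2 * ρ + 1) ^ 2) (σ : F →+* F)
    (hσ : ∀ x, σ x = x ^ (2 * ρ + 1))
    (α β γ : F) (f1 f2 s t : ℕ) (h2 : 0 < f2)
    (hα : α ^ (ρ + 1) = 1) (hβ : σ β = β) (hγ : σ γ = γ)
    (b : F) (j y : ℕ) (hj : j < t) (hb : b ^ f2 = γ * β ^ j) (hb2 : b ^ f1 = - α ^ y) :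
    (bigP α β γ f1 f2 s t).eval b = 0 ∧ IsSquare ((bigP α β γ f1 f2 s t).derivative.eval b) := by
  have hu : ∀ i : ℕ, (α ^ i) ^ (ρ + 1) = 1 := fun i => by
    rw [← pow_mul, mul_comm, pow_mul, hα, one_pow]
  have hm : IsSquare (-1 : F) := sq_fix hρ hF σ hσ _ (by simp)
  have e : bigP α β γ f1 f2 s t = (X ^ f2 - C (γ * β ^ j)) *
      (X * (∏ j' ∈ (Finset.range t).erase j, (X ^ f2 - C (γ * β ^ j'))) *
        ∏ i ∈ Finset.range s, (X ^ f1 - C (α ^ i))) := by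
    unfold bigP
    rw [← Finset.mul_prod_erase (Finset.range t) _ (Finset.mem_range.2 hj)]
    ring
  have h0 : (X ^ f2 - C (γ * β ^ j)).eval b = 0 := by simp [hb]
  rw [e]
  refine ⟨by rw [eval_mul, h0, zero_mul], ?_⟩
  rw [deriv_eval_factor _ _ _ h0]
  have e2 : eval b (derivative (X ^ f2 - C (γ * β ^ j))) * eval b
      (X * (∏ j' ∈ (Finset.range t).erase j, (X ^ f2 - C (γ * β ^ j'))) *
        ∏ i ∈ Finset.range s, (X ^ f1 - C (α ^ i))) =
      (f2 : F) * b ^ f2 * (∏ j' ∈ (Finset.range t).erase j, (γ * β ^ j - γ * β ^ j')) *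
        ∏ i ∈ Finset.range s, (-1 * (α ^ y + α ^ i)) := by
    have e3 : ∀ i, -1 * (α ^ y + α ^ i) = b ^ f1 - α ^ i := fun i => by rw [hb2]; ring
    simp only [e3]
    simp only [eval_mul, eval_prod, eval_sub, eval_pow, eval_X, eval_C, derivative_sub,
      derivative_X_pow, derivative_C, eval_natCast, eval_zero, sub_zero, map_natCast, ← hb]
    rw [← pow_sub_one_mul h2.ne' b]
    ring
  rw [e2]
  refine ((IsSquare.mul ?_ ?_).mul ?_).mul ?_
  · exact sq_fix hρ hF σ hσ _ (map_natCast _ _)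
  · rw [hb]
    exact sq_fix hρ hF σ hσ _ (by rw [map_mul, map_pow, hβ, hγ])
  · refine isSquare_prod' _ _ fun j' _ => sq_fix hρ hF σ hσ _ ?_
    rw [map_sub, map_mul, map_mul, map_pow, map_pow, hβ, hγ]
  · exact isSquare_prod' _ _ fun i _ => hm.mul (sq_add hρ hF σ hσ _ _ (hu _) (hu _))

open Polynomial in
lemma bigP_0 {ρ : ℕ} (hρ : 0 < ρ) (hF : Fintype.card F = (2 * ρ + 1) ^ 2) (σ : F →+* F)
    (hσ : ∀ x, σ x = x ^ (2 * ρ + 1))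
    (α β γ : F) (f1 f2 s t : ℕ) (h1 : 0 < f1) (h2 : 0 < f2)
    (hα : α ^ (ρ + 1) = 1) (hβ : σ β = β) (hγ : σ γ = γ) :
    (bigP α β γ f1 f2 s t).eval 0 = 0 ∧ IsSquare ((bigP α β γ f1 f2 s t).derivative.eval 0) := by
  have hm : IsSquare (-1 : F) := sq_fix hρ hF σ hσ _ (by simp)
  unfold bigP
  refine ⟨by simp, ?_⟩
  rw [mul_assoc, deriv_eval_factor _ _ _ (by simp)]
  simp only [derivative_X, eval_one, one_mul, eval_mul, eval_prod, eval_sub, eval_pow, eval_X, eval_C,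
    zero_pow h1.ne', zero_pow h2.ne', zero_sub]
  refine IsSquare.mul (isSquare_prod' _ _ fun i _ => ?_) (isSquare_prod' _ _ fun j _ => ?_)
  · rw [← neg_one_mul]
    exact hm.mul ((sq_of_pow hρ hF _ (α ^ (2 * ρ)) (by rw [pow_succ])
      (by rw [← pow_mul, mul_comm, pow_mul, hα, one_pow])).pow i)
  · exact sq_fix hρ hF σ hσ _ (by rw [map_neg, map_mul, map_pow, hβ, hγ])

end core

lemma exists_frob {F : Type*} [Field F] [Fintype F] (r : ℕ) (hr_pp : IsPrimePow r)
    (hF : Fintype.card F = r ^ 2) : ∃ σ : F →+* F, ∀ x, σ x = x ^ r := by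
  obtain ⟨p, k, hp, hk, rfl⟩ := hr_pp
  rw [← Nat.prime_iff] at hp
  obtain ⟨p', hc, n, hp', hn⟩ := FiniteField.card' F
  have : p' = p := by
    have h1 : p' ∣ (p ^ k) ^ 2 := by
      rw [← hF, hn]
      exact dvd_pow_self _ n.pos.ne'
    exact (Nat.prime_dvd_prime_iff_eq hp' hp).1 (hp'.dvd_of_dvd_pow (hp'.dvd_of_dvd_pow h1))
  subst this
  haveI : Fact p'.Prime := ⟨hp'⟩
  exact ⟨iterateFrobenius F p' k, fun x => iterateFrobenius_def ..⟩

lemma main_aux {F : Type*} [Field F] [Fintype F] [DecidableEq F]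
    (ρ e1 h f1 e2 f2 s t K M : ℕ) (hρ : 0 < ρ)
    (hF : Fintype.card F = (2 * ρ + 1) ^ 2) (σ : F →+* F)
    (hσ : ∀ x, σ x = x ^ (2 * ρ + 1))
    (h1 : 4 * ρ * (ρ + 1) = e1 * f1) (h2 : 4 * ρ * (ρ + 1) = e2 * f2)
    (he : e1 = 2 * h) (hK : e2 * (ρ + 1) = e1 * K) (hM : e1 * ρ = e2 * M)
    (hD : Odd (e1 / Nat.gcd e1 e2))
    (hs1 : 1 ≤ s) (hs2 : s ≤ e1 / Nat.gcd e1 e2)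
    (ht2 : t ≤ e2 / Nat.gcd e1 e2)
    (h4 : Even ((s - 1) * (ρ + 1)))
    (hn1 : Even (s * f1 + t * f2)) :
    ∃ C : Submodule F (Fin (s * f1 + t * f2 + 1) → F),
      Module.finrank F C = (s * f1 + t * f2) / 2 ∧
      C ≤ dualCode C ∧
      Module.finrank F (dualCode C) = Module.finrank F C + 1 ∧
      IsMinDist C ((s * f1 + t * f2) / 2 + 2) := by
  have hpos : 0 < 4 * ρ * (ρ + 1) := by positivity
  have he1 : 0 < e1 := Nat.pos_of_ne_zero (by rintro rfl; simp at h1; omega)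
  have hf1 : 0 < f1 := Nat.pos_of_ne_zero (by rintro rfl; simp at h1; omega)
  have he2 : 0 < e2 := Nat.pos_of_ne_zero (by rintro rfl; simp at h2; omega)
  have hf2 : 0 < f2 := Nat.pos_of_ne_zero (by rintro rfl; simp at h2; omega)
  have hh : 0 < h := by omega
  obtain ⟨θ, hθ⟩ : ∃ θ : F, orderOf θ = 4 * ρ * (ρ + 1) := by
    obtain ⟨g, hg⟩ := IsCyclic.exists_ofOrder_eq_natCard (α := Fˣ)
    refine ⟨g, ?_⟩
    rw [orderOf_units, hg, Nat.card_eq_fintype_card, Fintype.card_units, hF]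
    have : (2 * ρ + 1) ^ 2 = 4 * ρ * (ρ + 1) + 1 := by ring
    omega
  have hθ1 : θ ^ (e1 * f1) = 1 := by rw [← h1, ← hθ, pow_orderOf_eq_one]
  have hθ2 : θ ^ (e2 * f2) = 1 := by rw [← h2, ← hθ, pow_orderOf_eq_one]
  have hθ0 : θ ≠ 0 := by
    rintro rfl
    rw [zero_pow (by positivity)] at hθ1
    exact zero_ne_one hθ1
  have hneg : ∀ m, 2 * m = 4 * ρ * (ρ + 1) → θ ^ m = -1 := by
    intro m hm
    have a1 : (θ ^ m) ^ 2 = 1 := by rw [← pow_mul, mul_comm, hm, ← hθ, pow_orderOf_eq_one]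
    rcases (by simpa using a1 : θ ^ m = 1 ∨ θ ^ m = -1) with a2 | a2
    · have := Nat.le_of_dvd (by omega) (orderOf_dvd_of_pow_eq_one a2)
      omega
    · exact a2
  have hinj : ∀ m m', m < 4 * ρ * (ρ + 1) → m' < 4 * ρ * (ρ + 1) → θ ^ m = θ ^ m' → m = m' := by
    intro m m' a b c
    rw [← hθ] at a b
    exact pow_injOn_Iio_orderOf a b c
  obtain ⟨α, hαd⟩ : ∃ α, α = θ ^ (e2 * f1) := ⟨_, rfl⟩
  obtain ⟨β, hβd⟩ : ∃ β, β = θ ^ (e1 * f2) := ⟨_, rfl⟩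
  obtain ⟨γ, hγd⟩ : ∃ γ, γ = θ ^ (h * f2) := ⟨_, rfl⟩
  have hα : α ^ (ρ + 1) = 1 := by
    rw [hαd, ← pow_mul, show e2 * f1 * (ρ + 1) = (e2 * (ρ + 1)) * f1 by ring, hK,
      show e1 * K * f1 = e1 * f1 * K by ring, pow_mul, hθ1, one_pow]
  have hγ : σ γ = γ := by
    rw [hσ, pow_succ, hγd, ← pow_mul, show h * f2 * (2 * ρ) = (2 * h) * ρ * f2 by ring, ← he, hM,
      show e2 * M * f2 = e2 * f2 * M by ring, pow_mul, hθ2, one_pow, one_mul]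
  have hβ : σ β = β := by
    have : β = γ ^ 2 := by rw [hβd, hγd, ← pow_mul, he]; ring_nf
    rw [this, map_pow, hγ]
  have hγ0 : γ ≠ 0 := by rw [hγd]; exact pow_ne_zero _ hθ0
  have hoα : orderOf α = e1 / Nat.gcd e1 e2 := by
    rw [hαd, orderOf_pow' _ (by positivity), hθ, h1, Nat.gcd_mul_right, Nat.mul_div_mul_right _ _ hf1]
  have hoβ : orderOf β = e2 / Nat.gcd e1 e2 := by
    rw [hβd, orderOf_pow' _ (by positivity), hθ, h2, Nat.gcd_mul_right, Nat.mul_div_mul_right _ _ hf2,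
      Nat.gcd_comm]
  have hε : (θ ^ (ρ + 1)) ^ (2 * ρ) = -1 := by
    rw [← pow_mul]; exact hneg _ (by ring)
  have hεs : IsSquare ((θ ^ (ρ + 1)) ^ (s - 1)) := by
    rw [← pow_mul, mul_comm]; exact h4.isSquare_pow θ
  have hA1 : ∀ i x : ℕ, (θ ^ (e2 * i + e1 * x)) ^ f1 = α ^ i := by
    intro i x
    rw [hαd, ← pow_mul, ← pow_mul, show (e2 * i + e1 * x) * f1 = e2 * f1 * i + e1 * f1 * x by ring,
      pow_add, pow_mul _ (e1 * f1), hθ1, one_pow, mul_one]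
  have hA2 : ∀ i x : ℕ, (θ ^ (e2 * i + e1 * x)) ^ f2 = β ^ x := by
    intro i x
    rw [hβd, ← pow_mul, ← pow_mul, show (e2 * i + e1 * x) * f2 = e2 * f2 * i + e1 * f2 * x by ring,
      pow_add, pow_mul _ (e2 * f2), hθ2, one_pow, one_mul]
  have hB2 : ∀ j y : ℕ, (θ ^ (h + e1 * j + e2 * y)) ^ f2 = γ * β ^ j := by
    intro j y
    rw [hβd, hγd, ← pow_mul, ← pow_mul,
      show (h + e1 * j + e2 * y) * f2 = h * f2 + e1 * f2 * j + e2 * f2 * y by ring,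
      pow_add, pow_mul _ (e2 * f2), hθ2, one_pow, mul_one, pow_add]
  have hB1 : ∀ j y : ℕ, (θ ^ (h + e1 * j + e2 * y)) ^ f1 = - α ^ y := by
    intro j y
    rw [hαd, ← pow_mul, ← pow_mul,
      show (h + e1 * j + e2 * y) * f1 = h * f1 + e1 * f1 * j + e2 * f1 * y by ring,
      pow_add, pow_add, pow_mul _ (e1 * f1), hθ1, one_pow, mul_one,
      hneg (h * f1) (by rw [h1, he]; ring), neg_one_mul]
  let A : Finset F := (Finset.range s ×ˢ Finset.range f1).image (fun p => θ ^ (e2 * p.1 + e1 * p.2))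
  let B : Finset F := (Finset.range t ×ˢ Finset.range f2).image
    (fun p => θ ^ (h + e1 * p.1 + e2 * p.2))
  have hmA : ∀ a ∈ A, ∃ i x, i < s ∧ x < f1 ∧ a = θ ^ (e2 * i + e1 * x) := by
    intro a ha
    obtain ⟨⟨i, x⟩, hp, rfl⟩ := Finset.mem_image.1 ha
    rw [Finset.mem_product, Finset.mem_range, Finset.mem_range] at hp
    exact ⟨i, x, hp.1, hp.2, rfl⟩
  have hmB : ∀ a ∈ B, ∃ j y, j < t ∧ y < f2 ∧ a = θ ^ (h + e1 * j + e2 * y) := by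
    intro a ha
    obtain ⟨⟨i, x⟩, hp, rfl⟩ := Finset.mem_image.1 ha
    rw [Finset.mem_product, Finset.mem_range, Finset.mem_range] at hp
    exact ⟨i, x, hp.1, hp.2, rfl⟩
  have hcA : A.card = s * f1 := by
    rw [Finset.card_image_of_injOn, Finset.card_product, Finset.card_range, Finset.card_range]
    rintro ⟨i, x⟩ hp ⟨i', x'⟩ hp' heq
    simp only [Finset.coe_product, Finset.coe_range, Set.mem_prod, Set.mem_Iio] at hp hp'
    simp only at heq
    have e3 : i = i' := by
      have := congrArg (· ^ f1) heq
      simp only [hA1] at this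
      exact pow_injOn_Iio_orderOf (show i < orderOf α by omega) (show i' < orderOf α by omega) this
    subst e3
    rw [pow_add, pow_add] at heq
    have := hinj _ _ (by rw [h1]; exact Nat.mul_lt_mul_of_pos_left hp.2 he1)
      (by rw [h1]; exact Nat.mul_lt_mul_of_pos_left hp'.2 he1)
      (mul_left_cancel₀ (pow_ne_zero _ hθ0) heq)
    rw [Nat.eq_of_mul_eq_mul_left he1 this]
  have hcB : B.card = t * f2 := by
    rw [Finset.card_image_of_injOn, Finset.card_product, Finset.card_range, Finset.card_range]
    rintro ⟨i, x⟩ hp ⟨i', x'⟩ hp' heq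
    simp only [Finset.coe_product, Finset.coe_range, Set.mem_prod, Set.mem_Iio] at hp hp'
    simp only at heq
    have e3 : i = i' := by
      have := congrArg (· ^ f2) heq
      simp only [hB2] at this
      exact pow_injOn_Iio_orderOf (show i < orderOf β by omega) (show i' < orderOf β by omega)
        (mul_left_cancel₀ hγ0 this)
    subst e3
    rw [pow_add _ _ (e2 * x), pow_add _ _ (e2 * x')] at heq
    have := hinj _ _ (by rw [h2]; exact Nat.mul_lt_mul_of_pos_left hp.2 he2)
      (by rw [h2]; exact Nat.mul_lt_mul_of_pos_left hp'.2 he2)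
      (mul_left_cancel₀ (pow_ne_zero _ hθ0) heq)
    rw [Nat.eq_of_mul_eq_mul_left he2 this]
  have hne : (1 : F) ≠ -1 := by
    intro hc
    have h3 := hneg (2 * ρ * (ρ + 1)) (by ring)
    rw [← hc] at h3
    have := Nat.le_of_dvd (by positivity) (orderOf_dvd_of_pow_eq_one h3)
    nlinarith
  have hdisj : Disjoint A B := by
    rw [Finset.disjoint_left]
    intro a ha hb
    obtain ⟨i, x, -, -, ea⟩ := hmA a ha
    obtain ⟨j, y, -, -, eb⟩ := hmB a hb
    have e3 : α ^ i = - α ^ y := by rw [← hA1 i x, ← ea, eb, hB1]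
    have e4 := congrArg (· ^ orderOf α) e3
    rw [hoα] at e4
    rw [hD.neg_pow, ← hoα, ← pow_mul, ← pow_mul, mul_comm i, mul_comm y, pow_mul, pow_mul,
      pow_orderOf_eq_one, one_pow, one_pow] at e4
    exact hne e4
  have h0 : (0 : F) ∉ A ∪ B := by
    intro hc
    rcases Finset.mem_union.1 hc with hc | hc
    · obtain ⟨i, x, -, -, ea⟩ := hmA _ hc
      exact pow_ne_zero _ hθ0 ea.symm
    · obtain ⟨i, x, -, -, ea⟩ := hmB _ hc
      exact pow_ne_zero _ hθ0 ea.symm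
  have hall : ∀ a ∈ insert 0 (A ∪ B), (bigP α β γ f1 f2 s t).eval a = 0 ∧
      IsSquare ((bigP α β γ f1 f2 s t).derivative.eval a) := by
    intro a ha
    rcases Finset.mem_insert.1 ha with rfl | ha
    · exact bigP_0 hρ hF σ hσ α β γ f1 f2 s t hf1 hf2 hα hβ hγ
    rcases Finset.mem_union.1 ha with ha | ha
    · obtain ⟨i, x, hi, -, rfl⟩ := hmA _ ha
      exact bigP_A hρ hF σ hσ _ hε α β γ f1 f2 s t hf1 hα hβ hγ hεs _ i hi (hA1 _ _)
        (by rw [hA2, map_pow, hβ])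
    · obtain ⟨j, y, hj, -, rfl⟩ := hmB _ ha
      exact bigP_B hρ hF σ hσ α β γ f1 f2 s t hf2 hα hβ hγ _ j y hj (hB2 _ _) (hB1 _ _)
  refine code_of_poly (s * f1 + t * f2) hn1 (by positivity) (insert 0 (A ∪ B)) ?_
    (bigP α β γ f1 f2 s t) (bigP_monic _ _ _ _ _ _ _ hf1 hf2) (bigP_natDegree _ _ _ _ _ _ _ hf1 hf2)
    (fun a ha => (hall a ha).1) (fun a ha => (hall a ha).2)
  rw [Finset.card_insert_of_notMem h0, Finset.card_union_of_disjoint hdisj, hcA, hcB]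

/-- Theorem 5.1(2): if `n₁ = s·f₁ + t·f₂` is even, there is a `q`-ary MDS almost self-dual
code of length `n₁ + 1`, where `q = r²`. -/
theorem mds_almost_self_dual_even_length_succ
    (r e1 f1 e2 f2 s t l : ℕ)
    (hr_odd : Odd r) (hr_pp : IsPrimePow r)
    (hq1 : r ^ 2 - 1 = e1 * f1) (hq2 : r ^ 2 - 1 = e2 * f2)
    (hl : 2 ≤ l) (he1 : e1 % 2 ^ (l + 1) = 2 ^ l) (he2 : 2 ^ l ∣ e2)
    (hdvd1 : 2 * e2 ∣ e1 * (r - 1)) (hdvd2 : e1 ∣ e2 * (r + 1))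
    (hs1 : 1 ≤ s) (hs2 : s ≤ e1 / Nat.gcd e1 e2)
    (ht1 : 1 ≤ t) (ht2 : t ≤ e2 / Nat.gcd e1 e2)
    (h4 : 4 ∣ (s - 1) * (r + 1))
    (hn1 : Even (s * f1 + t * f2))
    (F : Type*) [Field F] [Fintype F] [DecidableEq F]
    (hF : Fintype.card F = r ^ 2) :
    ∃ C : Submodule F (Fin (s * f1 + t * f2 + 1) → F),
      Module.finrank F C = (s * f1 + t * f2) / 2 ∧
      C ≤ dualCode C ∧
      Module.finrank F (dualCode C) = Module.finrank F C + 1 ∧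
      IsMinDist C ((s * f1 + t * f2) / 2 + 2) := by

  obtain ⟨σ, hσ⟩ := exists_frob r hr_pp hF
  have hr1 : 1 < r := hr_pp.one_lt
  obtain ⟨ρ, rfl⟩ := hr_odd
  have hρ : 0 < ρ := by omega
  have hq : (2 * ρ + 1) ^ 2 - 1 = 4 * ρ * (ρ + 1) := by
    have : (2 * ρ + 1) ^ 2 = 4 * ρ * (ρ + 1) + 1 := by ring
    omega
  rw [hq] at hq1 hq2
  obtain ⟨m, hm⟩ : ∃ m, e1 = 2 ^ l * (2 * m + 1) := by
    refine ⟨e1 / 2 ^ (l + 1), ?_⟩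
    have := Nat.div_add_mod e1 (2 ^ (l + 1))
    rw [he1] at this
    conv_lhs => rw [← this]
    ring
  obtain ⟨c, hc⟩ := he2
  have h2l : 0 < 2 ^ l := by positivity
  obtain ⟨K, hK⟩ := hdvd2
  have hK2 : c * (2 * (ρ + 1)) = (2 * m + 1) * K := by
    apply Nat.eq_of_mul_eq_mul_left h2l
    rw [hm, hc] at hK
    linarith
  have hKe : Even K := by
    have : Even ((2 * m + 1) * K) := by rw [← hK2]; exact ⟨c * (ρ + 1), by ring⟩
    rcases Nat.even_mul.1 this with h | h
    · exact absurd h (by simp)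
    · exact h
  obtain ⟨K', rfl⟩ := hKe
  obtain ⟨M, hM⟩ := hdvd1
  have hD : Odd (e1 / Nat.gcd e1 e2) := by
    have hg : 2 ^ l ∣ Nat.gcd e1 e2 := Nat.dvd_gcd ⟨_, hm⟩ ⟨_, hc⟩
    obtain ⟨g, hg⟩ := hg
    have hd : e1 / Nat.gcd e1 e2 * Nat.gcd e1 e2 = e1 := Nat.div_mul_cancel (Nat.gcd_dvd_left _ _)
    generalize e1 / Nat.gcd e1 e2 = D at *
    rw [hg, hm] at hd
    have : D * g = 2 * m + 1 := by
      apply Nat.eq_of_mul_eq_mul_left h2l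
      rw [← hd]; ring
    have ho : Odd (D * g) := ⟨m, this⟩
    exact (Nat.odd_mul.1 ho).1
  have hle : 2 ^ l = 2 * 2 ^ (l - 1) := by rw [← pow_succ']; congr 1; omega
  refine main_aux ρ e1 (2 ^ (l - 1) * (2 * m + 1)) f1 e2 f2 s t K' M hρ hF σ hσ hq1 hq2 ?_ ?_ ?_ hD
    hs1 hs2 ht2 ?_ hn1
  · rw [hm, hle]; ring
  · have : 2 * (e2 * (ρ + 1)) = 2 * (e1 * K') := by linarith
    omega
  · rw [show 2 * ρ + 1 - 1 = 2 * ρ by omega] at hM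
    have : 2 * (e1 * ρ) = 2 * (e2 * M) := by linarith
    omega
  · obtain ⟨z, hz⟩ := h4
    have : 2 * ((s - 1) * (ρ + 1)) = 4 * z := by rw [← hz]; ring
    exact ⟨z, by omega⟩
end

section
/- Let q = r^2 with r an odd prime power. Suppose q − 1 = e_1 f_1 = e_2 f_2, there exists an integer l ≥ 2 with e_1 ≡ 2^l (mod 2^{l+1}) and 2^l | e_2, and that 2e_2 | e_1(r−1) and e_1 | e_2(r+1). Let s, t be integers with 1 ≤ s ≤ D_1, 1 ≤ t ≤ D_2 and 4 | (s−1)(r+1), and set n_1 = s·f_1 + t·f_2. If n_1 is odd (so n_1 + 1 is even), then for every integer k with 1 ≤ k ≤ (n_1+1)/2 − 1 there exists an [n_1+1, k] MDS self-orthogonal code over F_q, i.e., a linear code C ⊆ F_q^{n_1+1} with dim C = k, C ⊆ C⊥, and minimum Hamming distance (n_1+1) − k + 1. -/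
open Polynomial in
theorem aux_code {F : Type*} [Field F] [DecidableEq F] (N k : ℕ) (hk : 1 ≤ k) (hkN : 2 * k ≤ N)
    (x : Fin N → F) (hx : Function.Injective x)
    (hsq : ∀ i, IsSquare (∏ j ∈ Finset.univ.erase i, (x i - x j))) :
    ∃ C : Submodule F (Fin N → F), Module.finrank F C = k ∧ C ≤ dualCode C ∧
      IsMinDist C (N - k + 1) := by
  have hW : ∀ i, (∏ j ∈ Finset.univ.erase i, (x i - x j)) ≠ 0 := by
    intro i
    rw [Finset.prod_ne_zero_iff]
    intro j hj h
    exact (Finset.ne_of_mem_erase hj) (hx (sub_eq_zero.1 h)).symm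
  choose u hu using hsq
  have hu0 : ∀ i, u i ≠ 0 := fun i h => hW i (by rw [hu i, h, zero_mul])
  let φ : F[X] →ₗ[F] (Fin N → F) :=
    { toFun := fun p i => (u i)⁻¹ * p.eval (x i)
      map_add' := by intro p q; ext i; simp [mul_add]
      map_smul' := by intro c p; ext i; simp; ring }
  have hφ : ∀ p i, φ p i = (u i)⁻¹ * p.eval (x i) := fun _ _ => rfl
  have hz : ∀ p : F[X], p ≠ 0 → p.degree < k →
      (Finset.univ.filter (fun i => φ p i = 0)).card ≤ k - 1 := by
    intro p hp hd
    have h1 : ((Finset.univ.filter (fun i => φ p i = 0)).image x).card ≤ p.natDegree := by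
      apply Polynomial.card_le_degree_of_subset_roots
      intro a ha
      simp only [Finset.image_val, Multiset.mem_dedup, Multiset.mem_map, Finset.mem_val,
        Finset.mem_filter, hφ] at ha
      obtain ⟨i, hi, rfl⟩ := ha
      rw [Polynomial.mem_roots hp]
      have := hi.2
      simpa [hu0 i] using this
    rw [Finset.card_image_of_injective _ hx] at h1
    have := (Polynomial.natDegree_lt_iff_degree_lt hp).2 hd
    omega
  have hnorm : ∀ c : Fin N → F,
      hammingNorm c + (Finset.univ.filter (fun i => c i = 0)).card = N := by
    intro c
    have := Finset.card_filter_add_card_filter_not (s := (Finset.univ : Finset (Fin N)))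
      (fun i => c i = 0)
    simp only [hammingNorm]
    simp only [Finset.card_univ, Fintype.card_fin] at this
    rw [add_comm]
    exact this
  refine ⟨(degreeLT F k).map φ, ?_, ?_, ?_, ?_⟩
  · have hinj : Function.Injective (φ.domRestrict (degreeLT F k)) := by
      rw [← LinearMap.ker_eq_bot, LinearMap.ker_eq_bot']
      rintro ⟨p, hp⟩ h
      by_contra hne
      have hp0 : p ≠ 0 := fun h => hne (by simp [h])
      have h2 := hz p hp0 (mem_degreeLT.1 hp)
      have h3 : φ p = 0 := h
      rw [h3] at h2
      simp at h2
      omega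
    have := LinearMap.finrank_range_of_inj hinj
    rw [LinearMap.range_domRestrict] at this
    rw [this, (degreeLTEquiv F k).finrank_eq]
    simp
  · rintro _ ⟨p, hp, rfl⟩ _ ⟨q, hq, rfl⟩
    have hp' := mem_degreeLT.1 hp
    have hq' := mem_degreeLT.1 hq
    by_cases h0 : p * q = 0
    · apply Finset.sum_eq_zero
      intro i _
      have : (p * q).eval (x i) = 0 := by rw [h0]; simp
      rw [eval_mul] at this
      rw [hφ, hφ]
      linear_combination (u i)⁻¹ * (u i)⁻¹ * this
    have hp0 : p ≠ 0 := left_ne_zero_of_mul h0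
    have hq0 : q ≠ 0 := right_ne_zero_of_mul h0
    have h1 := (Polynomial.natDegree_lt_iff_degree_lt hp0).2 hp'
    have h2 := (Polynomial.natDegree_lt_iff_degree_lt hq0).2 hq'
    have h3 : (p * q).natDegree < N - 1 := by
      rw [natDegree_mul hp0 hq0]; omega
    have h4 : (p * q).degree < (Finset.univ : Finset (Fin N)).card := by
      rw [← Polynomial.natDegree_lt_iff_degree_lt h0]; simp; omega
    have h5 := Lagrange.coeff_eq_sum (s := Finset.univ) (v := x) hx.injOn h4
    rw [coeff_eq_zero_of_natDegree_lt (by simpa using h3)] at h5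
    rw [h5]
    apply Finset.sum_congr rfl
    intro i _
    rw [hφ, hφ, hu i, eval_mul]
    field_simp
  · rintro _ ⟨p, hp, rfl⟩ hne
    have hp0 : p ≠ 0 := fun h => hne (by simp [h])
    have h2 := hz p hp0 (mem_degreeLT.1 hp)
    have := hnorm (φ p)
    omega
  · let S : Finset (Fin N) := Finset.univ.filter (fun i => i.val < k - 1)
    have hS : S.card = k - 1 := by
      have : S = Finset.univ.filter (fun i : Fin N => i.val < k - 1) := rfl
      rw [this, Fin.card_filter_val_lt]; omega
    have hev : ∀ i, φ (Lagrange.nodal S x) i = 0 ↔ i ∈ S := by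
      intro i
      rw [hφ, Lagrange.eval_nodal, mul_eq_zero, Finset.prod_eq_zero_iff]
      simp only [inv_eq_zero, hu0 i, false_or, sub_eq_zero]
      exact ⟨fun ⟨a, ha, h⟩ => hx h ▸ ha, fun h => ⟨i, h, rfl⟩⟩
    have hcard : hammingNorm (φ (Lagrange.nodal S x)) = N - k + 1 := by
      have := hnorm (φ (Lagrange.nodal S x))
      simp only [hev, Finset.filter_mem_eq_inter, Finset.univ_inter, hS] at this
      omega
    refine ⟨_, ⟨Lagrange.nodal S x, ?_, rfl⟩, ?_, hcard⟩
    · apply mem_degreeLT.2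
      rw [Lagrange.degree_nodal, hS]
      exact_mod_cast (by omega : k - 1 < k)
    · intro h
      rw [h] at hcard
      simp at hcard

open Polynomial in
theorem aux_code2 {F : Type*} [Field F] [Fintype F] [DecidableEq F] (N k : ℕ) (hk : 1 ≤ k)
    (hkN : 2 * k ≤ N) (Q : F[X]) (hQ : Q.Monic) (hdeg : Q.natDegree = N)
    (hdvd : Q ∣ X ^ Fintype.card F - X)
    (hsq : ∀ a, Q.eval a = 0 → IsSquare ((derivative Q).eval a)) :
    ∃ C : Submodule F (Fin N → F), Module.finrank F C = k ∧ C ≤ dualCode C ∧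
      IsMinDist C (N - k + 1) := by
  have hne := FiniteField.X_pow_card_sub_X_ne_zero F (Fintype.one_lt_card (α := F))
  have hspl : (X ^ Fintype.card F - X : F[X]).Splits := by
    rw [splits_iff_card_roots, FiniteField.roots_X_pow_card_sub_X,
      FiniteField.X_pow_card_sub_X_natDegree_eq F (Fintype.one_lt_card (α := F))]
    rfl
  have hs := hspl.of_dvd hne hdvd
  have hnd : Q.roots.Nodup := by
    refine Multiset.nodup_of_le (roots.le_of_dvd hne hdvd) ?_
    rw [FiniteField.roots_X_pow_card_sub_X]
    exact Finset.univ.nodup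
  have hcard : Q.roots.toFinset.card = N := by
    rw [Multiset.toFinset_card_of_nodup hnd, ← hdeg]
    exact (splits_iff_card_roots.1 hs)
  let e := Q.roots.toFinset.equivFinOfCardEq hcard
  let x : Fin N → F := fun i => (e.symm i : F)
  have hx : Function.Injective x := Subtype.val_injective.comp e.symm.injective
  have hroot : ∀ i, Q.eval (x i) = 0 := by
    intro i
    have : x i ∈ Q.roots := Multiset.mem_toFinset.1 (e.symm i).2
    exact isRoot_of_mem_roots this
  have hQn : Q = Lagrange.nodal Finset.univ x := by
    apply eq_of_monic_of_dvd_of_natDegree_le (Lagrange.nodal_monic) hQ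
    · apply Finset.prod_dvd_of_coprime
      · intro i _ j _ hij
        exact pairwise_coprime_X_sub_C hx hij
      · intro i _
        exact dvd_iff_isRoot.2 (hroot i)
    · rw [Lagrange.natDegree_nodal, hdeg]; simp
  apply aux_code N k hk hkN x hx
  intro i
  have := hsq (x i) (hroot i)
  rw [hQn, Lagrange.eval_nodal_derivative_eval_node_eq (Finset.mem_univ i),
    Lagrange.eval_nodal] at this
  exact this

open Polynomial in
theorem aux_dvd {F : Type*} [Field F] (f D s : ℕ) (c : ℕ → F) (v : F)
    (hc : ∀ i, c i ^ D = v) (hinj : ∀ i < s, ∀ j < s, c i = c j → i = j) :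
    (∏ i ∈ Finset.range s, (X ^ f - C (c i))) ∣ (X ^ (f * D) - C v : F[X]) := by
  apply Finset.prod_dvd_of_coprime
  · intro i hi j hj hij
    have hne : c i - c j ≠ 0 := by
      intro h
      exact hij (hinj i (by simpa using hi) j (by simpa using hj) (sub_eq_zero.1 h))
    refine ⟨-C (c i - c j)⁻¹, C (c i - c j)⁻¹, ?_⟩
    have : (C (c i - c j)⁻¹ * (C (c i) - C (c j)) : F[X]) = 1 := by
      rw [← C_sub, ← C_mul, inv_mul_cancel₀ hne, C_1]
    linear_combination this
  · intro i _
    rw [← hc i, C_pow, pow_mul]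
    exact sub_dvd_pow_sub_pow _ _ _

open Polynomial in
theorem aux_deriv {F : Type*} [Field F] (f s : ℕ) (c : ℕ → F) (a : F) (i : ℕ)
    (hi : i ∈ Finset.range s) (ha : a ^ f = c i) :
    (derivative (∏ i ∈ Finset.range s, (X ^ f - C (c i)) : F[X])).eval a =
      f * a ^ (f - 1) * ∏ j ∈ (Finset.range s).erase i, (c i - c j) := by
  rw [← Finset.mul_prod_erase _ _ hi, derivative_mul]
  rw [derivative_sub, derivative_X_pow, derivative_C]
  simp [eval_prod, ha]

open Polynomial in
theorem aux_monic {F : Type*} [Field F] (f s : ℕ) (hf : f ≠ 0) (c : ℕ → F) :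
    (∏ i ∈ Finset.range s, (X ^ f - C (c i)) : F[X]).Monic ∧
    (∏ i ∈ Finset.range s, (X ^ f - C (c i)) : F[X]).natDegree = s * f := by
  have hm : ∀ i ∈ Finset.range s, (X ^ f - C (c i) : F[X]).Monic :=
    fun i _ => monic_X_pow_sub_C _ hf
  refine ⟨monic_prod_of_monic _ _ hm, ?_⟩
  rw [natDegree_prod_of_monic _ _ hm]
  simp [natDegree_X_pow_sub_C]

theorem aux_isSquare_prod {F ι : Type*} [Field F] (S : Finset ι) (g : ι → F)
    (h : ∀ i ∈ S, IsSquare (g i)) : IsSquare (∏ i ∈ S, g i) :=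
  Finset.prod_induction g IsSquare (fun _ _ => IsSquare.mul) IsSquare.one h

open Polynomial in
theorem aux_core {F : Type*} [Field F] [Fintype F] [DecidableEq F]
    (h D1 D2 f1 f2 M g s t k : ℕ) (hk : 1 ≤ k) (hkN : 2 * k ≤ s * f1 + t * f2 + 1)
    (hF : Fintype.card F = (2 * h + 1) ^ 2) (hch : ringChar F ≠ 2)
    (hfrob : ∀ a b : F, (a - b) ^ (2 * h + 1) = a ^ (2 * h + 1) - b ^ (2 * h + 1))
    (hnat : ∀ n : ℕ, (n : F) ^ (2 * h + 1) = n)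
    (hD1 : Odd D1) (hD1h : D1 ∣ h + 1) (hD2h : D2 ∣ h)
    (hM1 : f1 * D1 = M) (hM2 : f2 * D2 = M) (hf1 : f1 ≠ 0) (hf2 : f2 ≠ 0)
    (hg : (2 * h + 1) ^ 2 - 1 = M * g) (h4g : 4 ∣ g) (hs : s ≤ D1) (ht : t ≤ D2)
    (h4 : 2 ∣ (s - 1) * (h + 1))
    (y w : F) (hy : IsPrimitiveRoot y D1) (hw : IsPrimitiveRoot w (2 * D2)) :
    ∃ C : Submodule F (Fin (s * f1 + t * f2 + 1) → F), Module.finrank F C = k ∧ C ≤ dualCode C ∧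
      IsMinDist C (s * f1 + t * f2 + 1 - k + 1) := by
  have hD2 : D2 ≠ 0 := by
    rintro rfl
    simp at hM2
    subst hM2
    simp at hg
    have : 1 < Fintype.card F := Fintype.one_lt_card
    rw [hF] at this
    nlinarith
  have h20 : (2 : F) ≠ 0 := Ring.two_ne_zero hch
  have hhalf : Fintype.card F / 2 = 2 * h * (h + 1) := by
    rw [hF, show (2 * h + 1) ^ 2 = 2 * (2 * h * (h + 1)) + 1 by ring]; omega
  have hsqiff : ∀ a : F, a ^ (2 * h * (h + 1)) = 1 → IsSquare a := by
    intro a ha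
    by_cases h0 : a = 0
    · rw [h0]; exact IsSquare.zero
    · rw [FiniteField.isSquare_iff hch h0, hhalf]; exact ha
  have hsqFr : ∀ a : F, a ^ (2 * h + 1) = a → IsSquare a := by
    intro a ha
    by_cases h0 : a = 0
    · rw [h0]; exact IsSquare.zero
    · apply hsqiff
      have : a ^ (2 * h) = 1 := by
        apply mul_right_cancel₀ h0
        rw [← pow_succ, ha, one_mul]
      rw [pow_mul, this, one_pow]
  have hnorm : ∀ z z' : F, z ^ (2 * h + 2) = 1 → z' ^ (2 * h + 2) = 1 → z - z' ≠ 0 →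
      (z - z') ^ (2 * h * (h + 1)) * (z ^ (h + 1) * z' ^ (h + 1)) = (-1) ^ (h + 1) := by
    intro z z' hz hz' hne
    have h1 : (z - z') ^ (2 * h) * (z * z') = -1 := by
      apply mul_right_cancel₀ hne
      have := hfrob z z'
      rw [pow_succ] at this
      linear_combination (z * z') * this + z' * hz - z * hz'
    rw [pow_mul, ← mul_pow, ← mul_pow, h1]
  have hyD : y ^ D1 = 1 := hy.pow_eq_one
  have hwD : w ^ D2 = -1 := by
    have h1 : w ^ D2 * w ^ D2 = 1 := by rw [← pow_add, ← two_mul]; exact hw.pow_eq_one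
    rcases mul_self_eq_one_iff.1 h1 with h2 | h2
    · exfalso
      have := Nat.le_of_dvd (by omega) (hw.dvd_of_pow_eq_one D2 h2)
      omega
    · exact h2
  have hyh : y ^ (h + 1) = 1 := by
    obtain ⟨d, hd⟩ := hD1h
    rw [hd, pow_mul, hyD, one_pow]
  have hw2h : w ^ (2 * h) = 1 := by
    obtain ⟨d, hd⟩ := hD2h
    rw [hd, ← mul_assoc, pow_mul, hw.pow_eq_one, one_pow]
  set c1 : ℕ → F := fun i => y ^ i with hc1
  set c2 : ℕ → F := fun j => w ^ (2 * j + 1) with hc2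
  have hc1M : ∀ i, c1 i ^ D1 = 1 := by
    intro i; simp only [hc1]; rw [← pow_mul, mul_comm, pow_mul, hyD, one_pow]
  have hc2M : ∀ i, c2 i ^ D2 = -1 := by
    intro i; simp only [hc2]; rw [← pow_mul, mul_comm, pow_mul, hwD]
    exact Odd.neg_one_pow ⟨i, rfl⟩
  set P1 : F[X] := ∏ i ∈ Finset.range s, (X ^ f1 - C (c1 i)) with hP1
  set P2 : F[X] := ∏ i ∈ Finset.range t, (X ^ f2 - C (c2 i)) with hP2
  have hdv1 : P1 ∣ X ^ M - C 1 := by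
    rw [← hM1]
    apply aux_dvd _ _ _ _ _ hc1M
    intro i hi j hj hij
    exact hy.pow_inj (by omega) (by omega) hij
  have hdv2 : P2 ∣ X ^ M - C (-1) := by
    rw [← hM2]
    apply aux_dvd _ _ _ _ _ hc2M
    intro i hi j hj hij
    have := hw.pow_inj (by omega) (by omega) hij
    omega
  obtain ⟨g', rfl⟩ := h4g
  have hqM : Fintype.card F = M * (4 * g') + 1 := by
    rw [hF, ← hg]
    have : 0 < (2 * h + 1) ^ 2 := by positivity
    omega
  have hhM : 2 * h * (h + 1) = 2 * M * g' := by
    have : (2 * h + 1) ^ 2 = 2 * (2 * h * (h + 1)) + 1 := by ring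
    have h2 : M * (4 * g') = 2 * (2 * M * g') := by ring
    omega
  obtain ⟨m1, d1⟩ := aux_monic f1 s hf1 c1
  obtain ⟨m2, d2⟩ := aux_monic f2 t hf2 c2
  rw [← hP1] at m1 d1
  rw [← hP2] at m2 d2
  have e1 : ∀ a, P1.eval a = ∏ i ∈ Finset.range s, (a ^ f1 - c1 i) := by
    intro a; simp [hP1, eval_prod]
  have e2 : ∀ a, P2.eval a = ∏ i ∈ Finset.range t, (a ^ f2 - c2 i) := by
    intro a; simp [hP2, eval_prod]
  have hc1sq : ∀ i, IsSquare (c1 i) := by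
    intro i
    apply hsqiff
    simp only [hc1]
    rw [← pow_mul, show i * (2 * h * (h + 1)) = (h + 1) * (i * (2 * h)) by ring, pow_mul, hyh,
      one_pow]
  have hc2Fr : ∀ i, c2 i ^ (2 * h + 1) = c2 i := by
    intro i
    simp only [hc2]
    rw [pow_succ, ← pow_mul, mul_comm _ (2 * h), pow_mul, hw2h, one_pow, one_mul]
  have hc1n : ∀ i, c1 i ^ (h + 1) = 1 := by
    intro i
    simp only [hc1]
    rw [← pow_mul, mul_comm, pow_mul, hyh, one_pow]
  have hneg1 : IsSquare (-1 : F) := hsqFr _ (Odd.neg_one_pow ⟨h, rfl⟩)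
  have hasq : ∀ a : F, a ^ (2 * M) = 1 → IsSquare a := by
    intro a ha
    apply hsqiff
    rw [hhM, pow_mul, ha, one_pow]
  have hr1 : ∀ a, P1.eval a = 0 → a ^ M = 1 := by
    intro a ha
    have := eval_eq_zero_of_dvd_of_eval_eq_zero hdv1 ha
    simpa [sub_eq_zero] using this
  have hr2 : ∀ a, P2.eval a = 0 → a ^ M = -1 := by
    intro a ha
    have := eval_eq_zero_of_dvd_of_eval_eq_zero hdv2 ha
    simpa [add_eq_zero_iff_eq_neg] using this
  have mQ : (X * (P1 * P2)).Monic := monic_X.mul (m1.mul m2)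
  apply aux_code2 _ k hk hkN (X * (P1 * P2)) mQ
  · rw [monic_X.natDegree_mul (m1.mul m2), m1.natDegree_mul m2, d1, d2]; simp; ring
  · have hcop : IsCoprime (X ^ M - C 1 : F[X]) (X ^ M - C (-1)) := by
      refine ⟨-C (2⁻¹), C (2⁻¹), ?_⟩
      have : (C (2⁻¹) * 2 : F[X]) = 1 := by
        rw [← C_ofNat, ← C_mul, inv_mul_cancel₀ h20, C_1]
      simp only [C_neg, C_1]
      linear_combination this
    have hd := (IsCoprime.of_isCoprime_of_dvd_left
      (IsCoprime.of_isCoprime_of_dvd_right hcop hdv2) hdv1).mul_dvd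
      (hdv1.trans (dvd_mul_right _ _)) (hdv2.trans (dvd_mul_left _ (X ^ M - C 1)))
    rw [hqM, pow_succ, show (X ^ (M * (4 * g')) * X - X : F[X]) = X * (X ^ (M * (4 * g')) - 1) by
      ring]
    apply mul_dvd_mul_left
    refine hd.trans ?_
    rw [show ((X ^ M - C 1) * (X ^ M - C (-1)) : F[X]) = X ^ (2 * M) - 1 by
      simp only [C_neg, C_1]; ring]
    have := sub_dvd_pow_sub_pow (X ^ (2 * M) : F[X]) 1 (2 * g')
    rw [← pow_mul, one_pow] at this
    rw [show M * (4 * g') = 2 * M * (2 * g') by ring]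
    exact this
  · intro a ha
    rw [derivative_mul, derivative_mul]
    simp only [derivative_X, one_mul, eval_add, eval_mul, eval_X]
    simp only [eval_mul, eval_X, mul_eq_zero] at ha
    rcases ha with ha | ha | ha
    · subst ha
      rw [zero_mul, add_zero, e1, e2]
      simp only [zero_pow hf1, zero_pow hf2, zero_sub]
      refine (aux_isSquare_prod _ _ ?_).mul (aux_isSquare_prod _ _ ?_)
      · intro i _
        rw [neg_eq_neg_one_mul]; exact hneg1.mul (hc1sq i)
      · intro i _
        rw [neg_eq_neg_one_mul]; exact hneg1.mul (hsqFr _ (hc2Fr i))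
    · have haM := hr1 a ha
      have hsqa : IsSquare a := hasq a (by rw [mul_comm, pow_mul, haM, one_pow])
      rw [ha]
      simp only [zero_mul, zero_add, add_zero]
      have ha' := ha
      rw [e1, Finset.prod_eq_zero_iff] at ha'
      obtain ⟨i, hi, hai⟩ := ha'
      rw [sub_eq_zero] at hai
      refine hsqa.mul (IsSquare.mul ?_ ?_)
      · rw [hP1, aux_deriv f1 s c1 a i hi hai]
        refine ((hsqFr _ (hnat f1)).mul (hsqa.pow _)).mul ?_
        by_cases hz : ∏ j ∈ (Finset.range s).erase i, (c1 i - c1 j) = 0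
        · rw [hz]; exact IsSquare.zero
        apply hsqiff
        rw [← Finset.prod_pow, Finset.prod_congr rfl (g := fun _ => (-1 : F) ^ (h + 1))]
        · rw [Finset.prod_const, Finset.card_erase_of_mem hi, Finset.card_range, ← pow_mul,
            mul_comm]
          exact (even_iff_two_dvd.2 h4).neg_one_pow
        · intro j hj
          have hne := Finset.prod_ne_zero_iff.1 hz j hj
          have hn2 : ∀ i, c1 i ^ (2 * h + 2) = 1 := by
            intro i
            rw [show 2 * h + 2 = (h + 1) * 2 by ring, pow_mul, hc1n, one_pow]
          have := hnorm _ _ (hn2 i) (hn2 j) hne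
          rwa [hc1n, hc1n, mul_one, mul_one] at this
      · rw [e2]
        apply aux_isSquare_prod
        intro j _
        apply hsqFr
        rw [hfrob, hc2Fr]
        congr 1
        obtain ⟨d, hd⟩ := hD2h
        rw [pow_succ, ← pow_mul, show f2 * (2 * h) = f2 * D2 * (2 * d) by rw [hd]; ring, hM2,
          pow_mul, haM, one_pow, one_mul]
    · have haM := hr2 a ha
      have hsqa : IsSquare a := hasq a (by rw [mul_comm, pow_mul, haM]; norm_num)
      rw [ha]
      simp only [mul_zero, zero_add]
      have ha' := ha
      rw [e2, Finset.prod_eq_zero_iff] at ha'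
      obtain ⟨i, hi, hai⟩ := ha'
      rw [sub_eq_zero] at hai
      refine hsqa.mul (IsSquare.mul ?_ ?_)
      · rw [e1]
        apply aux_isSquare_prod
        intro j _
        by_cases hne : a ^ f1 - c1 j = 0
        · rw [hne]; exact IsSquare.zero
        have hb : (a ^ f1) ^ (h + 1) = (-1) ^ (h + 1) := by
          obtain ⟨d, hd⟩ := hD1h
          rw [← pow_mul, hd, ← mul_assoc, hM1, pow_mul, haM, pow_mul, hD1.neg_one_pow]
        have h1 := hnorm (a ^ f1) (c1 j)
          (by rw [show 2 * h + 2 = (h + 1) * 2 by ring, pow_mul, hb, ← pow_mul, mul_comm, pow_mul]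
              norm_num)
          (by rw [show 2 * h + 2 = (h + 1) * 2 by ring, pow_mul, hc1n, one_pow]) hne
        rw [hb, hc1n, mul_one] at h1
        apply hsqiff
        exact mul_right_cancel₀ (pow_ne_zero (h + 1) (neg_ne_zero.2 one_ne_zero)) (h1.trans (one_mul _).symm)
      · rw [hP2, aux_deriv f2 t c2 a i hi hai]
        refine ((hsqFr _ (hnat f2)).mul (hsqa.pow _)).mul ?_
        apply aux_isSquare_prod
        intro j _
        apply hsqFr
        rw [hfrob, hc2Fr, hc2Fr]

theorem aux_prim {F : Type*} [Field F] [Fintype F] (D : ℕ)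
    (hD : D ∣ Fintype.card F - 1) : ∃ y : F, IsPrimitiveRoot y D := by
  classical
  obtain ⟨u, hu⟩ := IsCyclic.exists_ofOrder_eq_natCard (α := Fˣ)
  rw [Nat.card_eq_fintype_card, Fintype.card_units] at hu
  obtain ⟨d, hd⟩ := hD
  have h1 := (IsPrimitiveRoot.orderOf u).map_of_injective (f := Units.coeHom F) Units.val_injective
  rw [hu] at h1
  have : 1 < Fintype.card F := Fintype.one_lt_card
  exact ⟨_, h1.pow (by omega) (hd.trans (mul_comm _ _))⟩

/-- Theorem 5.1(3): if `n₁ = s·f₁ + t·f₂` is odd, then for `1 ≤ k ≤ (n₁+1)/2 − 1` there is a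
`q`-ary `[n₁+1, k]` MDS self-orthogonal code, where `q = r²`. -/
theorem mds_self_orthogonal_odd_length_succ
    (r e1 f1 e2 f2 s t l : ℕ)
    (hr_odd : Odd r) (hr_pp : IsPrimePow r)
    (hq1 : r ^ 2 - 1 = e1 * f1) (hq2 : r ^ 2 - 1 = e2 * f2)
    (hl : 2 ≤ l) (he1 : e1 % 2 ^ (l + 1) = 2 ^ l) (he2 : 2 ^ l ∣ e2)
    (hdvd1 : 2 * e2 ∣ e1 * (r - 1)) (hdvd2 : e1 ∣ e2 * (r + 1))
    (hs1 : 1 ≤ s) (hs2 : s ≤ e1 / Nat.gcd e1 e2)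
    (ht1 : 1 ≤ t) (ht2 : t ≤ e2 / Nat.gcd e1 e2)
    (h4 : 4 ∣ (s - 1) * (r + 1))
    (hn1 : Odd (s * f1 + t * f2))
    (F : Type*) [Field F] [Fintype F] [DecidableEq F]
    (hF : Fintype.card F = r ^ 2) :
    ∀ k : ℕ, 1 ≤ k → k ≤ (s * f1 + t * f2 + 1) / 2 - 1 →
      ∃ C : Submodule F (Fin (s * f1 + t * f2 + 1) → F),
        Module.finrank F C = k ∧
        C ≤ dualCode C ∧
        IsMinDist C (s * f1 + t * f2 + 1 - k + 1) := by
  intro k hk1 hk2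
  obtain ⟨p, n, hp, hn, rfl⟩ := hr_pp
  rw [← Nat.prime_iff] at hp
  haveI := Fact.mk hp
  haveI : CharP F p := charP_of_card_eq_prime_pow (f := n * 2) (by rw [hF, pow_mul])
  have hp2 : p ≠ 2 := by
    rintro rfl
    exact (Nat.not_odd_iff_even.2 ((even_two).pow_of_ne_zero (by omega))) hr_odd
  have hch : ringChar F ≠ 2 := by rw [ringChar.eq F p]; exact hp2
  have hfrob : ∀ a b : F, (a - b) ^ (p ^ n) = a ^ (p ^ n) - b ^ (p ^ n) :=
    fun a b => sub_pow_char_pow a b n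
  have hnat : ∀ m : ℕ, (m : F) ^ (p ^ n) = m := by
    intro m
    have := map_natCast (iterateFrobenius F p n) m
    rwa [iterateFrobenius_def] at this
  generalize p ^ n = r at *
  obtain ⟨h, rfl⟩ := hr_odd
  have hc1 : 1 < Fintype.card F := Fintype.one_lt_card
  have hpos : 0 < (2 * h + 1) ^ 2 - 1 := by omega
  have he1p : 0 < e1 := Nat.pos_of_ne_zero (by rintro rfl; simp at hq1; omega)
  have he2p : 0 < e2 := Nat.pos_of_ne_zero (by rintro rfl; simp at hq2; omega)
  obtain ⟨D1, D2, hcop, hE1, hE2⟩ := Nat.exists_coprime e1 e2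
  have hgp : 0 < Nat.gcd e1 e2 := Nat.gcd_pos_of_pos_left e2 he1p
  have hl1 : 2 ^ l ∣ e1 := by
    have h1 : 2 ^ l ∣ e1 % 2 ^ (l + 1) := by rw [he1]
    exact (Nat.dvd_mod_iff (pow_dvd_pow 2 (Nat.le_succ l))).1 h1
  have hlg : 2 ^ l ∣ Nat.gcd e1 e2 := Nat.dvd_gcd hl1 he2
  generalize Nat.gcd e1 e2 = g at *
  subst hE1 hE2
  rw [Nat.mul_div_cancel _ hgp] at hs2 ht2
  have hD1 : Odd D1 := by
    rw [← Nat.not_even_iff_odd, even_iff_two_dvd]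
    intro h2
    have h3 : 2 ^ (l + 1) ∣ D1 * g := by
      rw [pow_succ, mul_comm]; exact mul_dvd_mul h2 hlg
    rw [Nat.mod_eq_zero_of_dvd h3] at he1
    have : 0 < 2 ^ l := by positivity
    omega
  have h4g : 4 ∣ g := (pow_dvd_pow 2 hl).trans hlg
  have hc2 : Nat.Coprime D1 2 := hD1.coprime_two_right
  have hD2h : D2 ∣ h := by
    have h1 : g * (2 * D2) ∣ g * (D1 * (2 * h)) := by
      convert hdvd1 using 1
      · ring
      · simp; ring
    have h2 := Nat.dvd_of_mul_dvd_mul_left hgp h1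
    have h3 := (Nat.Coprime.mul_right hc2 hcop).symm.dvd_of_dvd_mul_left h2
    exact Nat.dvd_of_mul_dvd_mul_left two_pos h3
  have hD1h : D1 ∣ h + 1 := by
    have h1 : g * D1 ∣ g * (D2 * (2 * (h + 1))) := by
      convert hdvd2 using 1 <;> ring
    have h2 := Nat.dvd_of_mul_dvd_mul_left hgp h1
    exact hc2.dvd_of_dvd_mul_left (hcop.dvd_of_dvd_mul_left h2)
  have hM : f2 * D2 = f1 * D1 := by
    apply Nat.eq_of_mul_eq_mul_left hgp
    linarith
  have hf1 : f1 ≠ 0 := by rintro rfl; simp at hq1; omega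
  have hf2 : f2 ≠ 0 := by rintro rfl; simp at hq2; omega
  have hq : (2 * h + 1) ^ 2 - 1 = 4 * h * (h + 1) := by
    rw [show (2 * h + 1) ^ 2 = 4 * h * (h + 1) + 1 by ring]; simp
  obtain ⟨y, hy⟩ := aux_prim (F := F) D1 (by
    rw [hF, hq]; exact hD1h.mul_left _)
  obtain ⟨w, hw⟩ := aux_prim (F := F) (2 * D2) (by
    rw [hF, hq, show 4 * h * (h + 1) = 2 * h * (2 * (h + 1)) by ring]
    exact (mul_dvd_mul_left 2 hD2h).mul_right _)
  refine aux_core h D1 D2 f1 f2 (f1 * D1) g s t k hk1 (by omega) hF hch hfrob hnat hD1 hD1h hD2h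
    rfl hM hf1 hf2 (by rw [hq1]; ring) h4g hs2 ht2 ?_ y w hy hw
  have h1 : 2 * 2 ∣ 2 * ((s - 1) * (h + 1)) := by
    convert h4 using 1; ring
  exact Nat.dvd_of_mul_dvd_mul_left two_pos h1
end

section
/- Let q = r^2 with r an odd prime power. Suppose q − 1 = e_1 f_1 = e_2 f_2, there exists an integer l ≥ 2 with e_1 ≡ 2^l (mod 2^{l+1}) and 2^l | e_2, and that 2e_2 | e_1(r+1) and e_1 | e_2(r−1). Let s, t be integers with 1 ≤ s ≤ D_1 and 1 ≤ t ≤ D_2, and set n_1 = s·f_1 + t·f_2. If both the integer t·e_1(r+1)/(2e_2) + (r+1)/2 and n_1 are even, then for every integer k with 1 ≤ k ≤ n_1/2 − 1 there exists an [n_1, k] MDS self-orthogonal code over F_q, i.e., a linear code C ⊆ F_q^{n_1} with dim C = k, C ⊆ C⊥, and minimum Hamming distance n_1 − k + 1. -/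
open Polynomial in
theorem grs_exists {F : Type*} [Field F] [DecidableEq F] (n k : ℕ) (hk1 : 1 ≤ k) (hk : k ≤ n)
    (a v : Fin n → F) (ha : Function.Injective a) (hv : ∀ i, v i ≠ 0)
    (horth : ∀ m, m ≤ 2 * k - 2 → ∑ i, v i ^ 2 * a i ^ m = 0) :
    ∃ C : Submodule F (Fin n → F), Module.finrank F C = k ∧ C ≤ dualCode C ∧
      IsMinDist C (n - k + 1) := by
  let L : degreeLT F k →ₗ[F] (Fin n → F) :=
    (LinearMap.pi (fun i => v i • leval (a i))) ∘ₗ (degreeLT F k).subtype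
  have hL : ∀ p i, L p i = v i * (p : F[X]).eval (a i) := fun p i => by simp [L, leval]
  have key : ∀ p : F[X], p.degree < k → ∀ s : Finset (Fin n), k ≤ s.card →
      (∀ i ∈ s, p.eval (a i) = 0) → p = 0 := by
    intro p hp s hs h
    refine eq_zero_of_degree_lt_of_eval_index_eq_zero (v := a) s ha.injOn ?_ h
    exact lt_of_lt_of_le hp (by exact_mod_cast hs)
  have hinj : Function.Injective L := by
    rw [← LinearMap.ker_eq_bot, LinearMap.ker_eq_bot']
    intro p hp
    apply Subtype.ext
    refine key p (mem_degreeLT.1 p.2) Finset.univ (by simpa using hk) ?_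
    intro i _
    have := congrFun hp i
    rw [hL] at this
    simpa [hv i] using this
  have hnorm : ∀ p, hammingNorm (L p) + (Finset.univ.filter (fun i => (p : F[X]).eval (a i) = 0)).card = n := by
    intro p
    have h1 : hammingNorm (L p) = (Finset.univ.filter (fun i => ¬ (p : F[X]).eval (a i) = 0)).card := by
      unfold hammingNorm
      congr 1
      ext i
      simp [hL, hv i]
    rw [h1, add_comm, Finset.card_filter_add_card_filter_not]
    simp
  have hlow : ∀ p, L p ≠ 0 → n - k + 1 ≤ hammingNorm (L p) := by
    intro p hp
    by_contra hlt
    have := hnorm p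
    apply hp
    have h0 : p = 0 := by
      apply Subtype.ext
      refine key p (mem_degreeLT.1 p.2) (Finset.univ.filter (fun i => (p : F[X]).eval (a i) = 0)) (by omega) ?_
      intro i hi
      simpa using hi
    rw [h0, map_zero]
  refine ⟨LinearMap.range L, ?_, ?_, ?_, ?_⟩
  · rw [LinearMap.finrank_range_of_inj hinj, (degreeLTEquiv F k).finrank_eq]
    simp
  · rintro _ ⟨p, rfl⟩
    rintro _ ⟨p', rfl⟩
    have hdeg : ((p : F[X]) * (p' : F[X])).natDegree < 2 * k - 1 := by
      have h1 := mem_degreeLT.1 p.2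
      have h2 := mem_degreeLT.1 p'.2
      have h1 : (p : F[X]).natDegree < k := by
        by_cases h : (p : F[X]) = 0
        · simp [h]; omega
        · exact (natDegree_lt_iff_degree_lt h).2 h1
      have h2 : (p' : F[X]).natDegree < k := by
        by_cases h : (p' : F[X]) = 0
        · simp [h]; omega
        · exact (natDegree_lt_iff_degree_lt h).2 h2
      have := natDegree_mul_le (p := (p : F[X])) (q := (p' : F[X]))
      omega
    calc ∑ i, L p i * L p' i
        = ∑ i, ∑ m ∈ Finset.range (2 * k - 1), ((p : F[X]) * p').coeff m * (v i ^ 2 * a i ^ m) := by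
          refine Finset.sum_congr rfl fun i _ => ?_
          rw [hL, hL]
          have := eval_eq_sum_range' hdeg (a i)
          rw [eval_mul] at this
          calc _ = v i ^ 2 * (eval (a i) (p : F[X]) * eval (a i) (p' : F[X])) := by ring
            _ = _ := by
              rw [this, Finset.mul_sum]
              exact Finset.sum_congr rfl fun m _ => by ring
      _ = 0 := by
          rw [Finset.sum_comm]
          refine Finset.sum_eq_zero fun m hm => ?_
          rw [← Finset.mul_sum, horth m (by have := Finset.mem_range.1 hm; omega), mul_zero]
  · rintro _ ⟨p, rfl⟩ hp
    exact hlow p hp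
  · obtain ⟨s, hs⟩ := Finset.exists_subset_card_eq (s := (Finset.univ : Finset (Fin n))) (n := k - 1) (by simp; omega)
    let p : F[X] := Lagrange.nodal s a
    have hp : p ∈ degreeLT F k := by
      rw [mem_degreeLT, Lagrange.degree_nodal, hs.2]
      exact_mod_cast (by omega : k - 1 < k)
    have hp0 : p ≠ 0 := Lagrange.nodal_ne_zero
    have hne : L ⟨p, hp⟩ ≠ 0 := by
      intro h
      rw [← map_zero L] at h
      exact hp0 (congrArg Subtype.val (hinj h))
    refine ⟨L ⟨p, hp⟩, ⟨_, rfl⟩, hne, le_antisymm ?_ (hlow _ hne)⟩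
    have h1 := hnorm ⟨p, hp⟩
    have h2 : s.card ≤ (Finset.univ.filter (fun i => (p : F[X]).eval (a i) = 0)).card := by
      apply Finset.card_le_card
      intro i hi
      simp [p, Lagrange.eval_nodal_at_node hi]
    simp only at h1
    omega

open Polynomial in
theorem sum_pow_div_derivative {F : Type*} [Field F] [DecidableEq F] (S : Finset F) (m : ℕ)
    (hm : m + 2 ≤ S.card) :
    ∑ x ∈ S, x ^ m / (derivative (Lagrange.nodal S id)).eval x = 0 := by
  have h := Lagrange.coeff_eq_sum (s := S) (v := id) (P := (X ^ m : F[X])) Function.injective_id.injOn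
    (by rw [degree_X_pow]; exact_mod_cast (by omega : m < S.card))
  rw [coeff_X_pow, if_neg (by omega)] at h
  rw [h]
  refine Finset.sum_congr rfl fun x hx => ?_
  have := Lagrange.eval_nodal_derivative_eval_node_eq (v := id) hx
  simp only [id] at this
  simp only [id, this, Lagrange.eval_nodal, eval_pow, eval_X]

/-- combination: from a finset of points. -/
theorem code_of_finset {F : Type*} [Field F] [Fintype F] [DecidableEq F] (S : Finset F) (n k M : ℕ)
    (hn : S.card = n)
    (hM : ∀ z : F, z ≠ 0 → (IsSquare z ↔ z ^ M = 1)) (h2M : ∀ z : F, z ≠ 0 → z ^ (2 * M) = 1)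
    (P : Polynomial F) (hP : P = Lagrange.nodal S id) (hS0 : (0 : F) ∉ S) (ε : F)
    (hε : ∀ x ∈ S, (x * (Polynomial.derivative P).eval x) ^ M = ε)
    (hk1 : 1 ≤ k) (hk : 2 * k + 1 ≤ n) :
    ∃ C : Submodule F (Fin n → F), Module.finrank F C = k ∧ C ≤ dualCode C ∧
      IsMinDist C (n - k + 1) := by
  have hD : ∀ x ∈ S, (Polynomial.derivative P).eval x ≠ 0 := by
    intro x hx
    have := Lagrange.eval_nodal_derivative_eval_node_eq (v := id) hx
    simp only [id] at this
    rw [hP, this, Lagrange.eval_nodal, Finset.prod_ne_zero_iff]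
    intro y hy
    exact sub_ne_zero.2 (Finset.ne_of_mem_erase hy).symm
  have hx0 : ∀ x ∈ S, x ≠ 0 := fun x hx h => hS0 (h ▸ hx)
  obtain ⟨x0, hx0S⟩ : S.Nonempty := Finset.card_pos.1 (by omega)
  set lam := x0 * (Polynomial.derivative P).eval x0 with hlam
  have hlam0 : lam ≠ 0 := mul_ne_zero (hx0 _ hx0S) (hD _ hx0S)
  have hv : ∀ x ∈ S, ∃ v : F, v ≠ 0 ∧ v ^ 2 = lam * (x / (Polynomial.derivative P).eval x) := by
    intro x hx
    have h0 : lam * (x * (Polynomial.derivative P).eval x) ≠ 0 :=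
      mul_ne_zero hlam0 (mul_ne_zero (hx0 _ hx) (hD _ hx))
    have : IsSquare (lam * (x * (Polynomial.derivative P).eval x)) := by
      rw [hM _ h0, mul_pow, hε x hx, ← hε x0 hx0S, ← hlam, ← pow_add, ← two_mul]
      exact h2M _ hlam0
    obtain ⟨w, hw⟩ := this
    have hw0 : w ≠ 0 := by
      rintro rfl
      exact h0 (by simpa using hw)
    refine ⟨w / (Polynomial.derivative P).eval x, div_ne_zero hw0 (hD _ hx), ?_⟩
    have := hD x hx
    rw [div_pow, pow_two w, ← hw]
    field_simp
  choose! v hv0 hv2 using hv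
  let e : Fin n ≃ S := (S.equivFinOfCardEq hn).symm
  refine grs_exists n k hk1 (by omega) (fun i => (e i : F)) (fun i => v (e i))
    (fun i j h => e.injective (Subtype.ext h)) (fun i => hv0 _ (e i).2) ?_
  intro m hm
  rw [Equiv.sum_comp e (fun x : S => v x ^ 2 * (x : F) ^ m), Finset.sum_coe_sort S (fun x => v x ^ 2 * x ^ m)]
  have h := sum_pow_div_derivative S (m + 1) (by omega)
  rw [← hP] at h
  calc _ = ∑ x ∈ S, lam * (x ^ (m + 1) / (Polynomial.derivative P).eval x) := by
        refine Finset.sum_congr rfl fun x hx => ?_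
        rw [hv2 x hx]; ring
    _ = 0 := by rw [← Finset.mul_sum, h, mul_zero]

theorem card_fiber {F : Type*} [Field F] [Fintype F] [DecidableEq F] (d e : ℕ)
    (hq : Fintype.card F - 1 = d * e) (hd : 0 < d) (he : 0 < e) (c : F) (hc : c ^ e = 1) :
    (Polynomial.nthRootsFinset d c).card = d := by
  have hc0 : c ≠ 0 := by rintro rfl; simp [he.ne'] at hc
  obtain ⟨g, hg⟩ := IsCyclic.exists_generator (α := Fˣ)
  have hog : orderOf g = d * e := by
    rw [orderOf_eq_card_of_forall_mem_zpowers hg, Nat.card_eq_fintype_card, Fintype.card_units, hq]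
  have hprim : IsPrimitiveRoot (g : F) (d * e) := by
    rw [← hog, IsPrimitiveRoot.coe_units_iff]
    exact IsPrimitiveRoot.orderOf g
  have hprimd : IsPrimitiveRoot ((g : F) ^ e) d :=
    hprim.pow (by positivity) (mul_comm d e)
  obtain ⟨j, hj⟩ : ∃ j : ℕ, g ^ j = Units.mk0 c hc0 := by
    have := hg (Units.mk0 c hc0)
    rw [← mem_powers_iff_mem_zpowers] at this
    exact this
  have hj' : (g : F) ^ j = c := by
    have := congrArg Units.val hj
    simpa using this
  have hdj : d ∣ j := by
    rw [← hj', ← pow_mul, hprim.pow_eq_one_iff_dvd] at hc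
    exact Nat.dvd_of_mul_dvd_mul_right he hc
  obtain ⟨i, rfl⟩ := hdj
  rw [Polynomial.nthRootsFinset_def, Multiset.toFinset_card_of_nodup (hprimd.nthRoots_nodup hc0),
    hprimd.card_nthRoots, if_pos ⟨(g : F) ^ i, by rw [← hj', ← pow_mul, mul_comm]⟩]

open Polynomial in
theorem deriv_formula {F : Type*} [Field F] [DecidableEq F] (X1 Y1 : Finset F) (f g : ℕ)
    (hf : 0 < f) (a : F) (ha : a ^ f ∈ X1) :
    a * (derivative ((Lagrange.nodal X1 id).comp (X ^ f) * (Lagrange.nodal Y1 id).comp (X ^ g))).eval a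
      = (f : F) * a ^ f * (∏ x ∈ X1.erase (a ^ f), (a ^ f - x)) * ∏ y ∈ Y1, (a ^ g - y) := by
  have h1 := Lagrange.eval_nodal_derivative_eval_node_eq (v := id) ha
  have h2 := Lagrange.eval_nodal_at_node (v := id) ha
  simp only [id] at h1 h2
  obtain ⟨f', rfl⟩ : ∃ f', f = f' + 1 := ⟨f - 1, by omega⟩
  simp only [derivative_mul, derivative_comp, eval_add, eval_mul, eval_comp, eval_pow, eval_X, h1, h2,
    Lagrange.eval_nodal, derivative_X_pow, id]
  simp
  ring

open Polynomial in
theorem core {F : Type*} [Field F] [Fintype F] [DecidableEq F]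
    (r f1 f2 D1 D2 G s t κ c k : ℕ) (hr : 3 ≤ r)
    (hF : Fintype.card F = r ^ 2) (hchar : ringChar F ≠ 2)
    (hfrob : ∀ x y : F, (x - y) ^ r = x ^ r - y ^ r) (hnat : ∀ n : ℕ, (n : F) ^ r = n)
    (hrp : r + 1 = 2 * (D2 * κ)) (hrm : r = 2 * (D1 * c) + 1)
    (hq1 : r ^ 2 - 1 = (D1 * G) * f1) (hq2 : r ^ 2 - 1 = (D2 * G) * f2)
    (hG : Even G) (hD1 : Odd D1) (hs : s ≤ D1) (ht : t ≤ D2) (ht1 : 1 ≤ t)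
    (hpar : Even (t * κ + D2 * κ)) (hk1 : 1 ≤ k) (hk : 2 * k + 1 ≤ s * f1 + t * f2) :
    ∃ C : Submodule F (Fin (s * f1 + t * f2) → F), Module.finrank F C = k ∧ C ≤ dualCode C ∧
      IsMinDist C (s * f1 + t * f2 - k + 1) := by
  have hq0 : 0 < r ^ 2 - 1 := by
    have : 3 ^ 2 ≤ r ^ 2 := Nat.pow_le_pow_left hr 2
    omega
  have hpos : 0 < D1 ∧ 0 < G ∧ 0 < f1 := by
    rw [hq1] at hq0
    refine ⟨?_, ?_, ?_⟩ <;> (apply Nat.pos_of_ne_zero; rintro rfl; simp at hq0)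
  have hpos2 : 0 < D2 ∧ 0 < G ∧ 0 < f2 := by
    rw [hq2] at hq0
    refine ⟨?_, ?_, ?_⟩ <;> (apply Nat.pos_of_ne_zero; rintro rfl; simp at hq0)
  obtain ⟨hD1p, hGp, hf1p⟩ := hpos
  obtain ⟨hD2p, -, hf2p⟩ := hpos2
  have hNN : f1 * D1 = f2 * D2 := by
    apply Nat.eq_of_mul_eq_mul_right hGp
    calc f1 * D1 * G = D1 * G * f1 := by ring
      _ = D2 * G * f2 := by rw [← hq1, hq2]
      _ = _ := by ring
  set h := D2 * κ with hh
  have hqh : r ^ 2 - 1 = 2 * (h * (r - 1)) := by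
    obtain ⟨r', rfl⟩ : ∃ r', r = r' + 1 := ⟨r - 1, by omega⟩
    have : (r' + 1) ^ 2 - 1 = (r' + 1 + 1) * r' := by
      have : (r' + 1) ^ 2 = (r' + 1 + 1) * r' + 1 := by ring
      omega
    rw [this, hrp]; simp [mul_assoc]
  have hne1 : (-1 : F) ≠ 1 := Ring.neg_one_ne_one_of_char_ne_two hchar
  set M := h * (r - 1) with hMdef
  have hMF : Fintype.card F / 2 = M := by
    rw [hF]; omega
  have hM : ∀ z : F, z ≠ 0 → (IsSquare z ↔ z ^ M = 1) := by
    intro z hz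
    rw [FiniteField.isSquare_iff hchar hz, hMF]
  have h2M : ∀ z : F, z ≠ 0 → z ^ (2 * M) = 1 := by
    intro z hz
    rw [← hqh, ← hF]
    exact FiniteField.pow_card_sub_one_eq_one z hz
  have hrM : ∀ z : F, z ≠ 0 → z ^ r = z → z ^ M = 1 := by
    intro z hz h1
    have : z ^ (r - 1) = 1 := by
      apply mul_right_cancel₀ hz
      rw [← pow_succ, Nat.sub_add_cancel (by omega), h1, one_mul]
    rw [hMdef, mul_comm, pow_mul, this, one_pow]
  have hevr : Even (r - 1) := ⟨D1 * c, by omega⟩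
  -- key norm-one computation
  have hnorm : ∀ u w : F, u ≠ w → u ≠ 0 → w ≠ 0 → u ^ (r + 1) = 1 → w ^ (r + 1) = 1 →
      (u - w) ^ M * (u ^ h * w ^ h) = (-1) ^ h := by
    intro u w huw hu hw hu1 hw1
    have hur : u ^ r * u = 1 := by rw [← pow_succ, hu1]
    have hwr : w ^ r * w = 1 := by rw [← pow_succ, hw1]
    have h1 : (u - w) ^ (r - 1) * (u * w) = -1 := by
      apply mul_right_cancel₀ (sub_ne_zero.2 huw)
      have : (u - w) ^ (r - 1) * (u - w) = u ^ r - w ^ r := by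
        rw [← pow_succ, Nat.sub_add_cancel (by omega), hfrob]
      calc _ = ((u - w) ^ (r - 1) * (u - w)) * (u * w) := by ring
        _ = (u ^ r * u) * w - (w ^ r * w) * u := by rw [this]; ring
        _ = _ := by rw [hur, hwr]; ring
    rw [hMdef, mul_comm h, pow_mul, ← mul_pow, ← mul_pow, h1]
  -- roots
  have hcX : (nthRootsFinset D1 (1 : F)).card = D1 :=
    card_fiber D1 (G * f1) (by rw [hF, hq1]; ring) hD1p (by positivity) 1 (by simp)
  have hcY : (nthRootsFinset D2 (-1 : F)).card = D2 :=
    card_fiber D2 (G * f2) (by rw [hF, hq2]; ring) hD2p (by positivity) (-1)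
      (Even.neg_one_pow (hG.mul_right _))
  obtain ⟨X1, hX1, hX1c⟩ := Finset.exists_subset_card_eq (hcX.symm ▸ hs)
  obtain ⟨Y1, hY1, hY1c⟩ := Finset.exists_subset_card_eq (hcY.symm ▸ ht)
  have hX : ∀ x ∈ X1, x ^ D1 = 1 := fun x hx => (mem_nthRootsFinset hD1p _).1 (hX1 hx)
  have hY : ∀ y ∈ Y1, y ^ D2 = -1 := fun y hy => (mem_nthRootsFinset hD2p _).1 (hY1 hy)
  let A := X1.biUnion (fun x => nthRootsFinset f1 x)
  let B := Y1.biUnion (fun x => nthRootsFinset f2 x)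
  have hA : ∀ a, a ∈ A ↔ a ^ f1 ∈ X1 := by
    intro a; simp [A, mem_nthRootsFinset hf1p]
  have hB : ∀ a, a ∈ B ↔ a ^ f2 ∈ Y1 := by
    intro a; simp [B, mem_nthRootsFinset hf2p]
  have hAc : A.card = s * f1 := by
    rw [Finset.card_biUnion, Finset.sum_const_nat (m := f1), hX1c]
    · intro x hx
      refine card_fiber f1 (D1 * G) (by rw [hF, hq1]; ring) hf1p (by positivity) x ?_
      rw [pow_mul, hX x hx, one_pow]
    · intro x hx y hy hxy
      refine Finset.disjoint_left.2 ?_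
      intro a ha hb
      rw [mem_nthRootsFinset hf1p] at ha hb
      exact hxy (ha.symm.trans hb)
  have hBc : B.card = t * f2 := by
    rw [Finset.card_biUnion, Finset.sum_const_nat (m := f2), hY1c]
    · intro x hx
      refine card_fiber f2 (D2 * G) (by rw [hF, hq2]; ring) hf2p (by positivity) x ?_
      rw [pow_mul, hY x hx, hG.neg_one_pow]
    · intro x hx y hy hxy
      refine Finset.disjoint_left.2 ?_
      intro a ha hb
      rw [mem_nthRootsFinset hf2p] at ha hb
      exact hxy (ha.symm.trans hb)
  have hAN : ∀ a ∈ A, a ^ (f1 * D1) = 1 := fun a ha => by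
    rw [pow_mul, hX _ ((hA a).1 ha)]
  have hBN : ∀ a ∈ B, a ^ (f1 * D1) = -1 := fun a ha => by
    rw [hNN, pow_mul, hY _ ((hB a).1 ha)]
  have hdisj : Disjoint A B := by
    rw [Finset.disjoint_left]
    intro a ha hb
    exact hne1 ((hBN a hb).symm.trans (hAN a ha))
  have hScard : (A ∪ B).card = s * f1 + t * f2 := by
    rw [Finset.card_union_of_disjoint hdisj, hAc, hBc]
  have hN0 : f1 * D1 ≠ 0 := by positivity
  have hA0 : ∀ a ∈ A, a ≠ 0 := by
    rintro a ha rfl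
    have := hAN 0 ha
    rw [zero_pow hN0] at this
    exact zero_ne_one this
  have hB0 : ∀ a ∈ B, a ≠ 0 := by
    rintro a ha rfl
    have := hBN 0 ha
    rw [zero_pow hN0] at this
    exact (neg_ne_zero.2 one_ne_zero) this.symm
  have hm1 : ∀ f : ℕ, 0 < f → (X ^ f : F[X]).natDegree ≠ 0 := by
    intro f hf; simp; omega
  let P : F[X] := (Lagrange.nodal X1 id).comp (X ^ f1) * (Lagrange.nodal Y1 id).comp (X ^ f2)
  have hPm : P.Monic :=
    (Lagrange.nodal_monic.comp (monic_X_pow _) (hm1 _ hf1p)).mul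
      (Lagrange.nodal_monic.comp (monic_X_pow _) (hm1 _ hf2p))
  have hPd : P.natDegree = s * f1 + t * f2 := by
    rw [((Lagrange.nodal_monic.comp (monic_X_pow _) (hm1 _ hf1p))).natDegree_mul
      (Lagrange.nodal_monic.comp (monic_X_pow _) (hm1 _ hf2p))]
    simp [natDegree_comp, hX1c, hY1c]
  have hP : P = Lagrange.nodal (A ∪ B) id := by
    refine eq_of_degree_sub_lt_of_eval_finset_eq (A ∪ B) ?_ ?_
    · have hd : P.degree = (Lagrange.nodal (A ∪ B) id : F[X]).degree := by
        rw [degree_eq_natDegree hPm.ne_zero, hPd, Lagrange.degree_nodal, hScard]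
      have := degree_sub_lt hd hPm.ne_zero (by rw [hPm.leadingCoeff, Lagrange.nodal_monic.leadingCoeff])
      rwa [hd, Lagrange.degree_nodal] at this
    · intro a ha
      have h2 := Lagrange.eval_nodal_at_node (v := id) ha
      simp only [id] at h2
      rw [h2]
      simp only [P, eval_mul, eval_comp, eval_pow, eval_X]
      rcases Finset.mem_union.1 ha with ha | ha
      · have h3 := Lagrange.eval_nodal_at_node (v := id) ((hA a).1 ha)
        simp only [id] at h3
        rw [h3, zero_mul]
      · have h3 := Lagrange.eval_nodal_at_node (v := id) ((hB a).1 ha)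
        simp only [id] at h3
        rw [h3, mul_zero]
  have hcast : ((r ^ 2 - 1 : ℕ) : F) = -1 := by
    have h0 : ((Fintype.card F : ℕ) : F) = 0 := Nat.cast_card_eq_zero F
    rw [hF] at h0
    rw [Nat.cast_sub (by omega), h0]; simp
  have hf1F : (f1 : F) ≠ 0 := by
    intro h0
    rw [hq1, Nat.cast_mul, h0, mul_zero] at hcast
    exact (neg_ne_zero.2 one_ne_zero) hcast.symm
  have hf2F : (f2 : F) ≠ 0 := by
    intro h0
    rw [hq2, Nat.cast_mul, h0, mul_zero] at hcast
    exact (neg_ne_zero.2 one_ne_zero) hcast.symm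
  have hXr : ∀ x : F, x ^ D1 = 1 → x ^ r = x := by
    intro x hx
    rw [hrm, pow_succ, mul_comm 2, mul_assoc, pow_mul, hx, one_pow, one_mul]
  have hX0 : ∀ x : F, x ^ D1 = 1 → x ≠ 0 := by
    rintro x hx rfl
    rw [zero_pow hD1p.ne'] at hx
    exact zero_ne_one hx
  have hXr' : ∀ x : F, x ^ D1 = -1 → x ^ r = x := by
    intro x hx
    rw [hrm, pow_succ, mul_comm 2, mul_assoc, pow_mul, hx, Even.neg_one_pow (by simp), one_mul]
  have hYh : ∀ y : F, y ^ D2 = -1 → y ^ h = (-1) ^ κ := by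
    intro y hy
    rw [hh, pow_mul, hy]
  have hsq : ((-1 : F) ^ κ) ^ 2 = 1 := by rw [← pow_mul, mul_comm, pow_mul]; simp
  have hYr : ∀ y : F, y ^ D2 = -1 → y ^ (r + 1) = 1 := by
    intro y hy
    rw [hrp, mul_comm, pow_mul, hYh y hy, hsq]
  have hY0 : ∀ y : F, y ^ D2 = -1 → y ≠ 0 := by
    rintro y hy rfl
    rw [zero_pow hD2p.ne'] at hy
    exact (neg_ne_zero.2 one_ne_zero) hy.symm
  refine code_of_finset (A ∪ B) _ k M hScard hM h2M P hP ?_ (((-1) ^ h) ^ (t - 1)) ?_ hk1 hk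
  · intro h0
    rcases Finset.mem_union.1 h0 with h0 | h0
    · exact hA0 0 h0 rfl
    · exact hB0 0 h0 rfl
  intro a ha
  rcases Finset.mem_union.1 ha with ha | ha
  · have hx := (hA a).1 ha
    simp only [P]
    rw [deriv_formula X1 Y1 f1 f2 hf1p a hx]
    rw [mul_pow, mul_pow, mul_pow, hrM _ hf1F (hnat _), hrM _ (hX0 _ (hX _ hx)) (hXr _ (hX _ hx)),
      ← Finset.prod_pow, ← Finset.prod_pow, Finset.prod_eq_one, Finset.prod_congr rfl
        (g := fun _ => (-1 : F) ^ h * (-1) ^ κ)]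
    · rw [Finset.prod_const, hY1c]
      obtain ⟨t', rfl⟩ : ∃ t', t = t' + 1 := ⟨t - 1, by omega⟩
      simp only [one_mul, Nat.add_sub_cancel]
      have : ((-1 : F) ^ h * (-1) ^ κ) ^ (t' + 1) = ((-1) ^ h) ^ t' * (-1) ^ ((t' + 1) * κ + h) := by
        ring
      rw [this, hpar.neg_one_pow, mul_one]
    · intro y hy
      have hz : (a ^ f2) ^ D2 = 1 := by rw [← pow_mul, ← hNN, hAN a ha]
      have hzh : (a ^ f2) ^ h = 1 := by rw [hh, pow_mul, hz, one_pow]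
      have hzy : a ^ f2 ≠ y := by
        intro he
        rw [he, hY y hy] at hz
        exact hne1 hz
      have := hnorm (a ^ f2) y hzy (pow_ne_zero _ (hA0 a ha)) (hY0 y (hY y hy))
        (by rw [hrp, mul_comm, pow_mul, hzh, one_pow]) (hYr y (hY y hy))
      rw [hzh, hYh y (hY y hy), one_mul] at this
      rw [← this, mul_assoc, ← pow_two, hsq, mul_one]
    · intro x' hx'
      have hx'1 := Finset.mem_of_mem_erase hx'
      refine hrM _ (sub_ne_zero.2 (Finset.ne_of_mem_erase hx').symm) ?_
      rw [hfrob, hXr _ (hX _ hx), hXr _ (hX _ hx'1)]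
  · have hy := (hB a).1 ha
    simp only [P]
    rw [mul_comm (Polynomial.comp _ _), deriv_formula Y1 X1 f2 f1 hf2p a hy]
    have hyM : (a ^ f2) ^ M = 1 := by
      rw [hMdef, pow_mul, hYh _ (hY _ hy), ← pow_mul, Even.neg_one_pow (hevr.mul_left _)]
    rw [mul_pow, mul_pow, mul_pow, hrM _ hf2F (hnat _), hyM, ← Finset.prod_pow, ← Finset.prod_pow,
      Finset.prod_eq_one (s := X1), Finset.prod_congr rfl (g := fun _ => (-1 : F) ^ h)]
    · rw [Finset.prod_const, Finset.card_erase_of_mem hy, hY1c]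
      simp
    · intro y' hy'
      have hy'1 := Finset.mem_of_mem_erase hy'
      have := hnorm (a ^ f2) y' (Finset.ne_of_mem_erase hy').symm (hY0 _ (hY _ hy)) (hY0 _ (hY _ hy'1))
        (hYr _ (hY _ hy)) (hYr _ (hY _ hy'1))
      rwa [hYh _ (hY _ hy), hYh _ (hY _ hy'1), ← pow_two, hsq, mul_one] at this
    · intro x hx
      have hw : (a ^ f1) ^ D1 = -1 := by rw [← pow_mul, hBN a ha]
      refine hrM _ (sub_ne_zero.2 ?_) ?_
      · intro he
        rw [he, hX x hx] at hw
        exact hne1 hw.symm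
      · rw [hfrob, hXr' _ hw, hXr _ (hX _ hx)]

/-- Theorem 5.2(1): if `(r+1)/2·(t·e₁/e₂ + 1)` and `n₁ = s·f₁ + t·f₂` are even, then for
`1 ≤ k ≤ n₁/2 − 1` there is a `q`-ary `[n₁, k]` MDS self-orthogonal code, where `q = r²`. -/
theorem mds_self_orthogonal_thm5_even_length
    (r e1 f1 e2 f2 s t l : ℕ)
    (hr_odd : Odd r) (hr_pp : IsPrimePow r)
    (hq1 : r ^ 2 - 1 = e1 * f1) (hq2 : r ^ 2 - 1 = e2 * f2)
    (hl : 2 ≤ l) (he1 : e1 % 2 ^ (l + 1) = 2 ^ l) (he2 : 2 ^ l ∣ e2)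
    (hdvd1 : 2 * e2 ∣ e1 * (r + 1)) (hdvd2 : e1 ∣ e2 * (r - 1))
    (hs1 : 1 ≤ s) (hs2 : s ≤ e1 / Nat.gcd e1 e2)
    (ht1 : 1 ≤ t) (ht2 : t ≤ e2 / Nat.gcd e1 e2)
    (heven : Even (t * e1 * (r + 1) / (2 * e2) + (r + 1) / 2))
    (hn1 : Even (s * f1 + t * f2))
    (F : Type*) [Field F] [Fintype F] [DecidableEq F]
    (hF : Fintype.card F = r ^ 2) :
    ∀ k : ℕ, 1 ≤ k → k ≤ (s * f1 + t * f2) / 2 - 1 →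
      ∃ C : Submodule F (Fin (s * f1 + t * f2) → F),
        Module.finrank F C = k ∧
        C ≤ dualCode C ∧
        IsMinDist C (s * f1 + t * f2 - k + 1) := by
  intro k hk1 hk
  obtain ⟨p, m, hp, hm, hpm⟩ := hr_pp
  have hpp : p.Prime := hp.nat_prime
  have : Fact p.Prime := ⟨hpp⟩
  have hcard : Fintype.card F = p ^ (m * 2) := by rw [hF, ← hpm, pow_mul]
  have : CharP F p := charP_of_card_eq_prime_pow hcard
  have hpodd : Odd p := by
    rw [← hpm] at hr_odd
    exact (Nat.odd_pow_iff hm.ne').1 hr_odd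
  have hchar : ringChar F ≠ 2 := by
    rw [ringChar.eq F p]
    rintro rfl
    exact absurd hpodd (by decide)
  have hr3 : 3 ≤ r := by
    have h1 : r ≠ 1 := by
      rw [← hpm]
      exact (Nat.one_lt_pow hm.ne' hpp.one_lt).ne'
    obtain ⟨j, hj⟩ := hr_odd
    omega
  have hfrob : ∀ x y : F, (x - y) ^ r = x ^ r - y ^ r := by
    intro x y
    rw [← hpm]
    exact sub_pow_expChar_pow x y m
  have hnat : ∀ n : ℕ, (n : F) ^ r = n := by
    intro n
    have := map_natCast (iterateFrobenius F p m) n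
    rwa [iterateFrobenius_def, hpm] at this
  have hq0 : 0 < r ^ 2 - 1 := by
    have : 3 ^ 2 ≤ r ^ 2 := Nat.pow_le_pow_left hr3 2
    omega
  have he1p : 0 < e1 := by
    rw [hq1] at hq0; exact Nat.pos_of_mul_pos_right hq0
  have he2p : 0 < e2 := by
    rw [hq2] at hq0; exact Nat.pos_of_mul_pos_right hq0
  obtain ⟨D1, D2, hcop, hD1, hD2⟩ := Nat.exists_coprime e1 e2
  set G := Nat.gcd e1 e2 with hG
  have hGp : 0 < G := Nat.gcd_pos_of_pos_left _ he1p
  have h1 : e1 / G = D1 := Nat.div_eq_of_eq_mul_left hGp hD1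
  have h2 : e2 / G = D2 := Nat.div_eq_of_eq_mul_left hGp hD2
  rw [h1] at hs2
  rw [h2] at ht2
  have h2e1 : 2 ^ l ∣ e1 := by
    rw [← Nat.div_add_mod e1 (2 ^ (l + 1)), he1]
    exact dvd_add ((pow_dvd_pow 2 (by omega)).trans (dvd_mul_right _ _)) dvd_rfl
  have h2G : 2 ^ l ∣ G := Nat.dvd_gcd h2e1 he2
  have hGe : Even G := even_iff_two_dvd.2 ((dvd_pow_self 2 (by omega)).trans h2G)
  have hD1o : Odd D1 := by
    rw [← Nat.not_even_iff_odd, even_iff_two_dvd]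
    intro hd
    have : 2 ^ (l + 1) ∣ e1 := by
      rw [hD1, pow_succ, mul_comm]
      exact mul_dvd_mul hd h2G
    rw [Nat.dvd_iff_mod_eq_zero] at this
    rw [this] at he1
    exact absurd he1 (by positivity)
  have hD2p : 0 < D2 := by
    apply Nat.pos_of_ne_zero; rintro rfl; omega
  have hdv1 : 2 * D2 ∣ r + 1 := by
    have h3 : 2 * D2 ∣ D1 * (r + 1) := by
      apply Nat.dvd_of_mul_dvd_mul_right hGp
      calc 2 * D2 * G = 2 * e2 := by rw [hD2]; ring
        _ ∣ e1 * (r + 1) := hdvd1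
        _ = D1 * (r + 1) * G := by rw [hD1]; ring
    refine Nat.Coprime.dvd_of_dvd_mul_left ?_ h3
    exact Nat.Coprime.mul_left (Nat.coprime_two_left.2 hD1o) hcop.symm
  have hdv2 : 2 * D1 ∣ r - 1 := by
    have h3 : D1 ∣ D2 * (r - 1) := by
      apply Nat.dvd_of_mul_dvd_mul_right hGp
      calc D1 * G = e1 := hD1.symm
        _ ∣ e2 * (r - 1) := hdvd2
        _ = D2 * (r - 1) * G := by rw [hD2]; ring
    have h4 : D1 ∣ r - 1 := Nat.Coprime.dvd_of_dvd_mul_left hcop h3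
    refine Nat.Coprime.mul_dvd_of_dvd_of_dvd (Nat.coprime_two_left.2 hD1o) ?_ h4
    obtain ⟨j, hj⟩ := hr_odd
    exact ⟨j, by omega⟩
  obtain ⟨κ, hκ⟩ := hdv1
  obtain ⟨c, hc⟩ := hdv2
  have hpar : Even (t * κ + D2 * κ) := by
    have e1' : t * e1 * (r + 1) / (2 * e2) = t * D1 * κ := by
      apply Nat.div_eq_of_eq_mul_left (by positivity)
      rw [hκ]
      conv_lhs => rw [hD1]
      conv_rhs => rw [hD2]
      ring
    have e2' : (r + 1) / 2 = D2 * κ := by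
      rw [hκ, mul_assoc]; omega
    rw [e1', e2'] at heven
    have hD1n : ¬ Even D1 := Nat.not_even_iff_odd.2 hD1o
    simp only [Nat.even_add, Nat.even_mul, hD1n, or_false] at heven ⊢
    exact heven
  have hq1' : r ^ 2 - 1 = (D1 * G) * f1 := by rw [← hD1]; exact hq1
  have hq2' : r ^ 2 - 1 = (D2 * G) * f2 := by rw [← hD2]; exact hq2
  exact core r f1 f2 D1 D2 G s t κ c k hr3 hF hchar hfrob hnat (by rw [hκ]; ring)
    (by rw [← mul_assoc, ← hc]; omega) hq1' hq2' hGe hD1o hs2 ht2 ht1 hpar hk1 (by omega)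
end
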